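/- arXiv:0802.0023 — 2 statements merged into one kernel-verified Lean document; each statement's English description precedes it below -/
import Mathlib

section
/- Let ν be a non-negative moment measure on ℝ with support in [0,∞) which is not determined in the sense of Stieltjes. Then there exist uncountably many non-negative measures σ on [0,∞) having the same moments as ν (σ ∈ W_ν^Sti) and satisfying ∫_0^∞ u^{-k} dσ(u) < ∞ for all k ∈ ℕ₀. -/
open MeasureTheory MvPolynomial Metric
open scoped ComplexOrder ENNReal

noncomputable section

/-- `d`-dimensional Euclidean space. -/
abbrev E (d : ℕ) := EuclideanSpace ℝ (Fin d)

/-- The (surface) measure `dθ` on the unit sphere `S^{d-1}`. -/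
noncomputable def sphMeas (d : ℕ) : Measure (sphere (0 : E d) 1) :=
  (volume : Measure (E d)).toSphere

/-- A bundled orthonormal basis `Y_{k,l}`, `l = 1,…,a_k`, of the spaces `H_k(ℝ^d)` of
real-valued harmonic polynomials homogeneous of degree `k`, orthonormal with respect to
`⟨f,g⟩ = ∫_{S^{d-1}} f g dθ`. -/
structure HarmonicBasis (d : ℕ) where
  a : ℕ → ℕ
  Y : (k : ℕ) → Fin (a k) → MvPolynomial (Fin d) ℝ
  harmonic : ∀ k l, (∑ i, pderiv i (pderiv i (Y k l))) = 0
  homogeneous : ∀ k l, (Y k l).IsHomogeneous k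
  orthonormal : ∀ (k k' : ℕ) (l : Fin (a k)) (l' : Fin (a k')),
    (∫ θ : sphere (0 : E d) 1,
        (eval (fun i => (θ : E d) i) (Y k l)) * (eval (fun i => (θ : E d) i) (Y k' l'))
      ∂(sphMeas d)) = if k = k' ∧ (l : ℕ) = (l' : ℕ) then 1 else 0
  complete : ∀ (k : ℕ) (P : MvPolynomial (Fin d) ℝ),
    (∑ i, pderiv i (pderiv i P)) = 0 → P.IsHomogeneous k →
      P ∈ Submodule.span ℝ (Set.range (Y k))

/-- Evaluation of a complex polynomial in `d` variables at a point of `ℝ^d`. -/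
def evalC {d : ℕ} (P : MvPolynomial (Fin d) ℂ) (x : E d) : ℂ :=
  eval (fun i => (x i : ℂ)) P

/-- The polynomial `|x|² = x₁² + … + x_d²`. -/
def normSqP (d : ℕ) : MvPolynomial (Fin d) ℂ := ∑ i, X i ^ 2

/-- Integral of a (complex- or real-valued) function with respect to a signed measure,
via the Jordan decomposition. -/
noncomputable def sInt {α : Type*} {G : Type*} [MeasurableSpace α] [NormedAddCommGroup G]
    [NormedSpace ℝ G] (μ : SignedMeasure α) (f : α → G) : G :=
  (∫ x, f x ∂μ.toJordanDecomposition.posPart) - ∫ x, f x ∂μ.toJordanDecomposition.negPart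

/-- A signed measure is a moment measure if every polynomial is integrable with respect to
its total variation. -/
def IsMomentMeasure {d : ℕ} (μ : SignedMeasure (E d)) : Prop :=
  ∀ P : MvPolynomial (Fin d) ℂ, Integrable (evalC P) μ.totalVariation

namespace HarmonicBasis

variable {d : ℕ} (B : HarmonicBasis d)

/-- `Y_{k,l}` as a function on `ℝ^d`. -/
def Yf (k : ℕ) (l : Fin (B.a k)) (x : E d) : ℝ := eval (fun i => x i) (B.Y k l)

/-- `Y_{k,l}` as a complex polynomial. -/
def YC (k : ℕ) (l : Fin (B.a k)) : MvPolynomial (Fin d) ℂ :=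
  (B.Y k l).map (algebraMap ℝ ℂ)

/-- The Laplace–Fourier coefficient `f_{k,l}(r) = ∫_{S^{d-1}} f(rθ) Y_{k,l}(θ) dθ`. -/
noncomputable def lfCoeff (f : E d → ℂ) (k : ℕ) (l : Fin (B.a k)) (r : ℝ) : ℂ :=
  ∫ θ : sphere (0 : E d) 1, f (r • (θ : E d)) * (B.Yf k l (θ : E d) : ℂ) ∂(sphMeas d)

/-- `GaussDecomp B f K p` : `p` is a Gauss (Laplace–Fourier) decomposition of the polynomial
`f`, i.e. `f(x) = ∑_{k=0}^{K} ∑_{l=1}^{a_k} p_{k,l}(|x|²) Y_{k,l}(x)` with `p_{k,l} = 0` for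
`k > K`. -/
def GaussDecomp (f : MvPolynomial (Fin d) ℂ) (K : ℕ)
    (p : (k : ℕ) → Fin (B.a k) → Polynomial ℂ) : Prop :=
  (∀ k, K < k → ∀ l, p k l = 0) ∧
    f = ∑ k ∈ Finset.range (K + 1), ∑ l,
      Polynomial.aeval (normSqP d) (p k l) * B.YC k l

/-- The component functional `T_{k,l}(p) = T(p(|x|²) Y_{k,l}(x))`. -/
def component (T : MvPolynomial (Fin d) ℂ → ℂ) (k : ℕ) (l : Fin (B.a k))
    (p : Polynomial ℂ) : ℂ :=
  T (Polynomial.aeval (normSqP d) p * B.YC k l)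

/-- A functional `T` on `ℂ[x₁,…,x_d]` is pseudo-positive definite (w.r.t. the basis `Y_{k,l}`)
if `T_{k,l}(p* p) ≥ 0` and `T_{k,l}(t · p*(t) p(t)) ≥ 0` for all univariate `p` and all `k, l`. -/
def PPD (T : MvPolynomial (Fin d) ℂ → ℂ) : Prop :=
  ∀ (k : ℕ) (l : Fin (B.a k)) (p : Polynomial ℂ),
    0 ≤ B.component T k l (p.map (starRingEnd ℂ) * p) ∧
    0 ≤ B.component T k l (Polynomial.X * (p.map (starRingEnd ℂ) * p))

/-- A signed measure `μ` on `ℝ^d` is pseudo-positive (w.r.t. the basis `Y_{k,l}`) if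
`∫ h(|x|) Y_{k,l}(x) dμ ≥ 0` for every non-negative continuous compactly supported `h`. -/
def PseudoPositive (μ : SignedMeasure (E d)) : Prop :=
  ∀ (k : ℕ) (l : Fin (B.a k)) (h : ℝ → ℝ), Continuous h → HasCompactSupport h →
    (∀ t, 0 ≤ h t) → 0 ≤ sInt μ (fun x => h ‖x‖ * B.Yf k l x)

/-- `ν` is the family of component measures `μ_{k,l}` of the signed measure `μ`, i.e.
`∫_0^∞ h dμ_{k,l} = ∫_{ℝ^d} h(|x|) Y_{k,l}(x) dμ` for all continuous compactly supported `h`. -/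
def IsComponentFamily (μ : SignedMeasure (E d))
    (ν : (k : ℕ) → Fin (B.a k) → Measure ℝ) : Prop :=
  ∀ k l, (ν k l) (Set.Iio 0) = 0 ∧
    ∀ h : ℝ → ℝ, Continuous h → HasCompactSupport h →
      ∫ t, h t ∂(ν k l) = sInt μ (fun x => h ‖x‖ * B.Yf k l x)

/-- The summability condition `C_N = ∑_{k,l} ∫_0^∞ r^N r^{-k} dσ_{k,l}(r) < ∞` for all `N`. -/
def SummCond (σ : (k : ℕ) → Fin (B.a k) → Measure ℝ) : Prop :=
  ∀ N : ℕ, (∑' k : ℕ, ∑ l, ∫⁻ r, (ENNReal.ofReal r) ^ N * ((ENNReal.ofReal r) ^ k)⁻¹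
    ∂(σ k l)) < ⊤

end HarmonicBasis

/-- The set `W_τ^{Sti}` of all non-negative moment measures on `[0,∞)` having the same
moments as `τ`. -/
def WSti (τ : Measure ℝ) : Set (Measure ℝ) :=
  {ρ | ρ (Set.Iio 0) = 0 ∧ (∀ m : ℕ, Integrable (fun t => t ^ m) ρ) ∧
    ∀ m : ℕ, ∫ t, t ^ m ∂ρ = ∫ t, t ^ m ∂τ}

/-- A measure `ν` on `[0,∞)` is determined in the sense of Stieltjes if it is the only
non-negative measure on `[0,∞)` with its moments. -/
def StieltjesDeterminate (ν : Measure ℝ) : Prop :=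
  ∀ τ : Measure ℝ, τ ∈ WSti ν → τ = ν

/-!
Let `τ ≠ ν` be two solutions of the moment problem and `μ = τ + ν`. Dividing polynomials by `1 + X`,
one sees that evaluation at `-1` is bounded for the norm of `L¹(μ)`, since otherwise `τ` and `ν`
would have the same integrals against all powers of `(1 + u)⁻¹`. Replacing each complex root `r` of
a polynomial by `‖r‖` decreases its modulus on `[0, ∞)` and turns its value at `-1` into a bound for
its values on `[-1, 1]`, so evaluation at every such point is bounded as well. Consequently, for
small `ε`, a polynomial that is non-negative on `[ε, ∞)` cannot be too negative on `[0, ε]`, its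
`L¹(μ)`-norm is at most twice its integral, and for some `δ > 0` and all `s ∈ [ε, 1]` the
functional `p ↦ ∫ p dν - δ p(s)` is non-negative on such polynomials. By Haviland's theorem, an
instance of Choquet's theorem on adapted spaces, it is integration against a measure on `[ε, ∞)`.
Adding `δ` times the Dirac mass at `s` gives a solution on `[ε, ∞)` with an atom at `s`, whereas the
atoms of countably many finite measures form a countable set.
-/

open Filter Topology
open scoped Polynomial CompactlySupported BoundedContinuousFunction

theorem exists_nonneg_extension_of_majorizing {E : Type*} [AddCommGroup E] [PartialOrder E]
    [IsOrderedAddMonoid E] [Module ℝ E] [PosSMulMono ℝ E] {V W : Submodule ℝ E} (hVW : V ≤ W)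
    (hmaj : ∀ y ∈ W, ∃ x ∈ V, y ≤ x) (L : V →ₗ[ℝ] ℝ) (hL : ∀ x : V, 0 ≤ (x : E) → 0 ≤ L x) :
    ∃ G : W →ₗ[ℝ] ℝ, (∀ x : V, G (Submodule.inclusion hVW x) = L x) ∧
      ∀ y : W, 0 ≤ (y : E) → 0 ≤ G y := by
  let e := Submodule.submoduleOfEquivOfLe hVW
  have hdense (y : W) : ∃ x : V.submoduleOf W,
      (x : W) + y ∈ (PointedCone.positive ℝ E).comap W.subtype := by
    obtain ⟨x, hxV, hx⟩ := hmaj (-y) (W.neg_mem y.2)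
    exact ⟨e.symm ⟨x, hxV⟩, neg_le_iff_add_nonneg.mp hx⟩
  obtain ⟨G, hGL, hG⟩ := riesz_extension ((PointedCone.positive ℝ E).comap W.subtype)
    ⟨V.submoduleOf W, L ∘ₗ e⟩ (fun x hx => hL (e x) hx) hdense
  exact ⟨G, fun x => hGL (e.symm x), fun y hy => hG y hy⟩

section MonotoneConvergence

variable {α : Type*} [MeasurableSpace α] {μ : Measure α}

theorem integrable_and_integral_eq_of_monotone_of_tendsto {f : ℕ → α → ℝ} {F : α → ℝ} {c : ℝ}
    (hf : ∀ n, Integrable (f n) μ) (hmono : ∀ᵐ x ∂μ, Monotone fun n => f n x)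
    (hlim : ∀ᵐ x ∂μ, Tendsto (fun n => f n x) atTop (𝓝 (F x)))
    (hint : Tendsto (fun n => ∫ x, f n x ∂μ) atTop (𝓝 c)) :
    Integrable F μ ∧ ∫ x, F x ∂μ = c := by
  have hlintegral : ∫⁻ x, ENNReal.ofReal (F x - f 0 x) ∂μ
      = ENNReal.ofReal (c - ∫ x, f 0 x ∂μ) := by
    refine tendsto_nhds_unique (lintegral_tendsto_of_tendsto_of_monotone
      (f := fun n x => ENNReal.ofReal (f n x - f 0 x))
      (fun n => ((hf n).sub (hf 0)).aestronglyMeasurable.aemeasurable.ennreal_ofReal) ?_ ?_) ?_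
    · filter_upwards [hmono] with x hx m n hmn
      exact ENNReal.ofReal_le_ofReal (sub_le_sub_right (hx hmn) _)
    · filter_upwards [hlim] with x hx
      exact ENNReal.tendsto_ofReal (hx.sub_const _)
    · refine (ENNReal.tendsto_ofReal (hint.sub_const _)).congr fun n => ?_
      rw [← integral_sub (hf n) (hf 0)]
      refine ofReal_integral_eq_lintegral_ofReal ((hf n).sub (hf 0)) ?_
      filter_upwards [hmono] with x hx using sub_nonneg.mpr (hx n.zero_le)
  have hsub : Integrable (fun x => F x - f 0 x) μ := by
    refine ⟨(aestronglyMeasurable_of_tendsto_ae atTop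
      (fun n => (hf n).aestronglyMeasurable) hlim).sub (hf 0).aestronglyMeasurable, ?_⟩
    rw [hasFiniteIntegral_iff_ofReal, hlintegral]
    · exact ENNReal.ofReal_lt_top
    · filter_upwards [hmono, hlim] with x hx hx' using sub_nonneg.mpr (hx.ge_of_tendsto hx' 0)
  have hF : Integrable F μ :=
    (hsub.add (hf 0)).congr (.of_forall fun x => sub_add_cancel (F x) (f 0 x))
  exact ⟨hF, tendsto_nhds_unique (integral_tendsto_of_tendsto_of_monotone hf hF hmono hlim) hint⟩

theorem tendsto_sub_inv_nat_succ_mul (a b : ℝ) :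
    Tendsto (fun n : ℕ => a - ((n : ℝ) + 1)⁻¹ * b) atTop (𝓝 a) := by
  simpa [one_div] using
    tendsto_const_nhds.sub ((tendsto_one_div_add_atTop_nhds_zero_nat (𝕜 := ℝ)).mul_const b)

theorem integrable_and_integral_eq_of_truncations {f g : α → ℝ} {a b : ℝ} (hf : 0 ≤ f)
    (hg : 0 ≤ g) (hint : ∀ n : ℕ, Integrable (fun x => max (f x - ((n : ℝ) + 1)⁻¹ * g x) 0) μ)
    (hlower : ∀ n : ℕ, a - ((n : ℝ) + 1)⁻¹ * b
      ≤ ∫ x, max (f x - ((n : ℝ) + 1)⁻¹ * g x) 0 ∂μ)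
    (hupper : ∀ n : ℕ, ∫ x, max (f x - ((n : ℝ) + 1)⁻¹ * g x) 0 ∂μ ≤ a) :
    Integrable f μ ∧ ∫ x, f x ∂μ = a := by
  refine integrable_and_integral_eq_of_monotone_of_tendsto hint
    (.of_forall fun x m n hmn => ?_) (.of_forall fun x => ?_)
    (tendsto_of_tendsto_of_tendsto_of_le_of_le (tendsto_sub_inv_nat_succ_mul a b)
      tendsto_const_nhds hlower hupper)
  · have hinv : ((n : ℝ) + 1)⁻¹ ≤ ((m : ℝ) + 1)⁻¹ := by gcongr
    exact max_le_max_right 0 (sub_le_sub_left (mul_le_mul_of_nonneg_right hinv (hg x)) _)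
  · simpa only [max_eq_left (show (0 : ℝ) ≤ f x from hf x)] using
      (tendsto_sub_inv_nat_succ_mul (f x) (g x)).max (tendsto_const_nhds (x := (0 : ℝ)))

end MonotoneConvergence

section Adapted

variable {X : Type*} [TopologicalSpace X]

/-- Choquet's adapted spaces of continuous functions: `V` is spanned by its non-negative elements,
which have no common zero, and each of which is negligible at infinity with respect to another
one. -/
structure IsAdapted (V : Submodule ℝ C(X, ℝ)) : Prop where
  exists_eq_sub : ∀ f ∈ V, ∃ p ∈ V, ∃ q ∈ V, 0 ≤ p ∧ 0 ≤ q ∧ f = p - q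
  exists_pos : ∀ x, ∃ f ∈ V, 0 ≤ f ∧ 0 < f x
  exists_dominating : ∀ f ∈ V, 0 ≤ f → ∃ g ∈ V, 0 ≤ g ∧
    ∀ c > 0, ∃ K, IsCompact K ∧ ∀ x ∉ K, f x ≤ c * g x

/-- The continuous functions dominated in absolute value by an element of `V`; a positive
functional on `V` extends to them. -/
def dominatedSubmodule (V : Submodule ℝ C(X, ℝ)) : Submodule ℝ C(X, ℝ) where
  carrier := {f | ∃ p ∈ V, ∀ x, |f x| ≤ p x}
  zero_mem' := ⟨0, V.zero_mem, by simp⟩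
  add_mem' := by
    rintro f g ⟨p, hp, hfp⟩ ⟨q, hq, hgq⟩
    exact ⟨p + q, V.add_mem hp hq, fun x => (abs_add_le _ _).trans (add_le_add (hfp x) (hgq x))⟩
  smul_mem' := by
    rintro c f ⟨p, hp, hfp⟩
    refine ⟨|c| • p, V.smul_mem _ hp, fun x => ?_⟩
    simpa only [ContinuousMap.smul_apply, smul_eq_mul, abs_mul]
      using mul_le_mul_of_nonneg_left (hfp x) (abs_nonneg c)

theorem IsAdapted.le_dominatedSubmodule {V : Submodule ℝ C(X, ℝ)} (hV : IsAdapted V) :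
    V ≤ dominatedSubmodule V := by
  intro f hf
  obtain ⟨p, hpV, q, hqV, hp, hq, rfl⟩ := hV.exists_eq_sub f hf
  refine ⟨p + q, V.add_mem hpV hqV, fun x => (abs_sub _ _).trans_eq ?_⟩
  exact congrArg₂ _ (abs_of_nonneg (hp x)) (abs_of_nonneg (hq x))

theorem IsAdapted.exists_one_le_on_compact {V : Submodule ℝ C(X, ℝ)} (hV : IsAdapted V)
    {K : Set X} (hK : IsCompact K) : ∃ f ∈ V, 0 ≤ f ∧ ∀ x ∈ K, 1 ≤ f x := by
  refine hK.induction_on (p := fun K => ∃ f ∈ V, 0 ≤ f ∧ ∀ x ∈ K, 1 ≤ f x)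
    ⟨0, V.zero_mem, le_rfl, by simp⟩ ?mono ?union ?nhds
  case mono =>
    rintro s t hst ⟨f, hfV, hf, hft⟩
    exact ⟨f, hfV, hf, fun x hx => hft x (hst hx)⟩
  case union =>
    rintro s t ⟨f, hfV, hf, hfs⟩ ⟨g, hgV, hg, hgt⟩
    refine ⟨f + g, V.add_mem hfV hgV, add_nonneg hf hg, ?_⟩
    rintro x (hx | hx)
    · exact (hfs x hx).trans (le_add_of_nonneg_right (hg x))
    · exact (hgt x hx).trans (le_add_of_nonneg_left (hf x))
  case nhds =>
    intro x _
    obtain ⟨f, hfV, hf, hfx⟩ := hV.exists_pos x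
    refine ⟨{y | f x / 2 < f y}, mem_nhdsWithin_of_mem_nhds
      (f.continuous.continuousAt.eventually_const_lt (half_lt_self hfx)),
      (f x / 2)⁻¹ • f, V.smul_mem _ hfV, smul_nonneg (by positivity) hf, fun y hy => ?_⟩
    rw [ContinuousMap.smul_apply, smul_eq_mul, inv_mul_eq_div, one_le_div (half_pos hfx)]
    exact le_of_lt hy

theorem IsAdapted.mem_dominatedSubmodule_of_hasCompactSupport {V : Submodule ℝ C(X, ℝ)}
    (hV : IsAdapted V) {f : C(X, ℝ)} (hf : HasCompactSupport f) : f ∈ dominatedSubmodule V := by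
  obtain ⟨B, hB⟩ := hf.exists_bound_of_continuous f.continuous
  obtain ⟨p, hpV, hp, hp1⟩ := hV.exists_one_le_on_compact hf
  refine ⟨|B| • p, V.smul_mem _ hpV, fun x => ?_⟩
  rw [ContinuousMap.smul_apply, smul_eq_mul]
  by_cases hx : x ∈ tsupport f
  · exact (hB x).trans ((le_abs_self B).trans (le_mul_of_one_le_right (abs_nonneg B) (hp1 x hx)))
  · rw [image_eq_zero_of_notMem_tsupport hx, abs_zero]
    exact mul_nonneg (abs_nonneg B) (hp x)

theorem hasCompactSupport_sub_smul_sup_zero [R1Space X] {f g : C(X, ℝ)} {c : ℝ}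
    (hfg : ∃ K, IsCompact K ∧ ∀ x ∉ K, f x ≤ c * g x) :
    HasCompactSupport ((f - c • g) ⊔ 0 : C(X, ℝ)) := by
  obtain ⟨K, hK, hfK⟩ := hfg
  exact .intro hK fun x hx => sup_eq_right.mpr (sub_nonpos.mpr (hfK x hx))

variable [T2Space X] [LocallyCompactSpace X] [MeasurableSpace X] [BorelSpace X]

theorem exists_measure_integral_eq_of_hasCompactSupport {W : Submodule ℝ C(X, ℝ)}
    (hW : ∀ f : C(X, ℝ), HasCompactSupport f → f ∈ W) (G : W →ₗ[ℝ] ℝ)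
    (hG : ∀ f : W, 0 ≤ (f : C(X, ℝ)) → 0 ≤ G f) :
    ∃ μ : Measure X, ∀ f : W, HasCompactSupport (f : C(X, ℝ)) →
      Integrable (f : C(X, ℝ)) μ ∧ ∫ x, (f : C(X, ℝ)) x ∂μ = G f := by
  let Λ₀ : C_c(X, ℝ) →ₗ[ℝ] ℝ :=
    { toFun := fun f => G ⟨f, hW f f.hasCompactSupport⟩
      map_add' := fun f g => by rw [← map_add]; rfl
      map_smul' := fun c f => by rw [RingHom.id_apply, ← map_smul]; rfl }
  let Λ : C_c(X, ℝ) →ₚ[ℝ] ℝ := PositiveLinearMap.mk₀ Λ₀ fun f hf => hG _ hf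
  exact ⟨RealRMK.rieszMeasure Λ, fun f hf =>
    ⟨(map_continuous (f : C(X, ℝ))).integrable_of_hasCompactSupport hf,
      RealRMK.integral_rieszMeasure Λ ⟨f, hf⟩⟩⟩

theorem IsAdapted.exists_measure {V : Submodule ℝ C(X, ℝ)} (hV : IsAdapted V) (L : V →ₗ[ℝ] ℝ)
    (hL : ∀ f : V, 0 ≤ (f : C(X, ℝ)) → 0 ≤ L f) :
    ∃ μ : Measure X, ∀ f : V, Integrable (f : C(X, ℝ)) μ ∧ ∫ x, (f : C(X, ℝ)) x ∂μ = L f := by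
  obtain ⟨G, hGL, hG⟩ := exists_nonneg_extension_of_majorizing hV.le_dominatedSubmodule
    (fun y ⟨p, hp, hyp⟩ => ⟨p, hp, fun x => (le_abs_self _).trans (hyp x)⟩) L hL
  have hG_mono {f g : dominatedSubmodule V} (hfg : (f : C(X, ℝ)) ≤ g) : G f ≤ G g := by
    simpa only [map_sub, sub_nonneg] using hG (g - f) (sub_nonneg.mpr hfg)
  obtain ⟨μ, hμ⟩ := exists_measure_integral_eq_of_hasCompactSupport
    (fun f => hV.mem_dominatedSubmodule_of_hasCompactSupport) G hG
  have h_nonneg (f : V) (hf : 0 ≤ (f : C(X, ℝ))) :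
      Integrable (f : C(X, ℝ)) μ ∧ ∫ x, (f : C(X, ℝ)) x ∂μ = L f := by
    obtain ⟨g, hgV, hg, hfg⟩ := hV.exists_dominating f f.2 hf
    -- The truncations `h n = (f - g / (n + 1))⁺` have compact support and increase to `f`.
    let h (n : ℕ) : C(X, ℝ) := ((f : C(X, ℝ)) - ((n : ℝ) + 1)⁻¹ • g) ⊔ 0
    have hcs (n : ℕ) : HasCompactSupport (h n) :=
      hasCompactSupport_sub_smul_sup_zero (hfg _ (by positivity))
    let hW (n : ℕ) : dominatedSubmodule V :=
      ⟨h n, hV.mem_dominatedSubmodule_of_hasCompactSupport (hcs n)⟩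
    refine integrable_and_integral_eq_of_truncations hf hg (b := L ⟨g, hgV⟩)
      (fun n => (hμ (hW n) (hcs n)).1) (fun n => ?_) (fun n => ?_)
    · refine le_of_le_of_eq ?_ (hμ (hW n) (hcs n)).2.symm
      rw [← smul_eq_mul, ← map_smul, ← map_sub, ← hGL]
      exact hG_mono le_sup_left
    · refine (hμ (hW n) (hcs n)).2.trans_le ?_
      rw [← hGL]
      exact hG_mono (sup_le (sub_le_self _ (smul_nonneg (by positivity) hg)) hf)
  refine ⟨μ, fun f => ?_⟩
  obtain ⟨p, hpV, q, hqV, hp, hq, hpq⟩ := hV.exists_eq_sub f f.2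
  obtain ⟨hp_int, hp_eq⟩ := h_nonneg ⟨p, hpV⟩ hp
  obtain ⟨hq_int, hq_eq⟩ := h_nonneg ⟨q, hqV⟩ hq
  obtain rfl : f = ⟨p, hpV⟩ - ⟨q, hqV⟩ := Subtype.ext hpq
  rw [map_sub, ← hp_eq, ← hq_eq]
  exact ⟨hp_int.sub hq_int, integral_sub hp_int hq_int⟩

end Adapted

theorem isAdapted_range_toContinuousMapOnAlgHom {K : Set ℝ} (hK : IsClosed K) :
    IsAdapted (Polynomial.toContinuousMapOnAlgHom K).toLinearMap.range where
  exists_eq_sub := by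
    rintro _ ⟨p, rfl⟩
    refine ⟨_, ⟨p ^ 2 + 1, rfl⟩, _, ⟨p ^ 2 - p + 1, rfl⟩, fun x => ?_, fun x => ?_, ?_⟩
    · have h_nonneg : 0 ≤ p.eval (x : ℝ) ^ 2 + 1 := by positivity
      simpa using h_nonneg
    · have h_nonneg : 0 ≤ p.eval (x : ℝ) ^ 2 - p.eval (x : ℝ) + 1 := by
        nlinarith [sq_nonneg (p.eval (x : ℝ) - 1), sq_nonneg (p.eval (x : ℝ))]
      simpa using h_nonneg
    · rw [← map_sub]
      congr 1
      ring
  exists_pos x := ⟨_, ⟨1, rfl⟩, fun y => by simp, by simp⟩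
  exists_dominating := by
    rintro _ ⟨p, rfl⟩ hp
    refine ⟨_, ⟨Polynomial.X ^ 2 * p, rfl⟩, fun x => ?_, fun c hc => ?_⟩
    · simpa using mul_nonneg (sq_nonneg (x : ℝ)) (hp x)
    · refine ⟨_, hK.isClosedEmbedding_subtypeVal.isCompact_preimage
        (isCompact_closedBall 0 √c⁻¹), fun x hx => ?_⟩
      have hx_sq : c⁻¹ < (x : ℝ) ^ 2 := by
        rw [← sq_abs]
        exact Real.lt_sq_of_sqrt_lt (by simpa using hx)
      have hcx : 1 ≤ c * (x : ℝ) ^ 2 := (inv_le_iff_one_le_mul₀' hc).mp hx_sq.le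
      simpa [mul_assoc] using le_mul_of_one_le_left (hp x) hcx

theorem exists_measure_of_forall_nonneg_on {K : Set ℝ} (hK : IsClosed K) (M : ℝ[X] →ₗ[ℝ] ℝ)
    (hM : ∀ p : ℝ[X], (∀ u ∈ K, 0 ≤ p.eval u) → 0 ≤ M p) :
    ∃ ρ : Measure ℝ, ρ Kᶜ = 0 ∧
      ∀ p : ℝ[X], Integrable (fun u => p.eval u) ρ ∧ ∫ u, p.eval u ∂ρ = M p := by
  let φ := (Polynomial.toContinuousMapOnAlgHom K).toLinearMap
  obtain ⟨L, rfl⟩ : M ∈ φ.dualMap.range := by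
    rw [LinearMap.range_dualMap_eq_dualAnnihilator_ker, Submodule.mem_dualAnnihilator]
    intro p hp
    have hpK (u) (hu : u ∈ K) : p.eval u = 0 := DFunLike.congr_fun hp ⟨u, hu⟩
    refine le_antisymm ?_ (hM p fun u hu => (hpK u hu).ge)
    simpa using hM (-p) fun u hu => by simp [hpK u hu]
  have : LocallyCompactSpace K := hK.isClosedEmbedding_subtypeVal.locallyCompactSpace
  obtain ⟨μ, hμ⟩ := (isAdapted_range_toContinuousMapOnAlgHom hK).exists_measure
    (L.domRestrict φ.range) (by
      rintro ⟨_, p, rfl⟩ hp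
      exact hM p fun u hu => hp ⟨u, hu⟩)
  have hval : MeasurableEmbedding ((↑) : K → ℝ) := .subtype_coe hK.measurableSet
  refine ⟨μ.map (↑), by simp [hval.map_apply], fun p => ?_⟩
  rw [hval.integrable_map_iff, hval.integral_map]
  exact hμ ⟨φ p, p, rfl⟩

theorem measure_eq_of_forall_integral_pow_eq {X : Type*} [TopologicalSpace X] [PolishSpace X]
    [MeasurableSpace X] [BorelSpace X] {σ τ : Measure X} [IsFiniteMeasure σ] [IsFiniteMeasure τ]
    {g : X →ᵇ ℝ} (hg : Function.Injective g)
    (heq : ∀ k : ℕ, ∫ x, g x ^ k ∂σ = ∫ x, g x ^ k ∂τ) : σ = τ := by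
  let A : StarSubalgebra ℝ (X →ᵇ ℝ) :=
    { (Polynomial.aeval (R := ℝ) g).range with star_mem' := fun {f} hf => hf }
  have h_separates : (A.map (BoundedContinuousFunction.toContinuousMapStarₐ ℝ)).SeparatesPoints :=
    fun x y hxy => ⟨g, ⟨_, ⟨g, ⟨Polynomial.X, Polynomial.aeval_X g⟩, rfl⟩, rfl⟩, hg.ne hxy⟩
  refine ext_of_forall_mem_subalgebra_integral_eq_of_polish h_separates ?_
  rintro _ ⟨p, rfl⟩
  have h_int (μ : Measure X) [IsFiniteMeasure μ] (k : ℕ) :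
      Integrable (fun x => p.coeff k * g x ^ k) μ := ((g ^ k).integrable μ).const_mul _
  have h_eval (x : X) : Polynomial.aeval g p x
      = ∑ k ∈ Finset.range (p.natDegree + 1), p.coeff k * g x ^ k := by
    simp [Polynomial.aeval_eq_sum_range]
  change ∫ x, Polynomial.aeval g p x ∂σ = ∫ x, Polynomial.aeval g p x ∂τ
  simp only [h_eval]
  rw [integral_finsetSum _ fun k _ => h_int σ k, integral_finsetSum _ fun k _ => h_int τ k]
  simp only [integral_const_mul, heq]

/-- The function `u ↦ (1 + u)⁻¹` on the half-line `[0, ∞)`. -/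
def invOneAdd : Set.Ici (0 : ℝ) →ᵇ ℝ :=
  .ofNormedAddCommGroup (fun u => (1 + (u : ℝ))⁻¹)
    (.inv₀ (by fun_prop) fun u => (add_pos_of_pos_of_nonneg one_pos u.2).ne') 1 fun u => by
      have hu : (0 : ℝ) ≤ u := u.2
      rw [Real.norm_of_nonneg (by positivity)]
      exact inv_le_one_of_one_le₀ (by linarith)

theorem invOneAdd_injective : Function.Injective invOneAdd := fun _ _ h =>
  Subtype.ext (add_left_cancel (inv_injective h))

theorem measure_eq_of_forall_integral_inv_one_add_pow_eq {σ τ : Measure ℝ} [IsFiniteMeasure σ]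
    [IsFiniteMeasure τ] (hσ : ∀ᵐ u ∂σ, 0 ≤ u) (hτ : ∀ᵐ u ∂τ, 0 ≤ u)
    (heq : ∀ k : ℕ, ∫ u, ((1 + u)⁻¹) ^ k ∂σ = ∫ u, ((1 + u)⁻¹) ^ k ∂τ) : σ = τ := by
  have h_restrict {μ : Measure ℝ} (hμ : ∀ᵐ u ∂μ, 0 ≤ u) : μ.restrict (Set.Ici 0) = μ :=
    Measure.restrict_eq_self_of_ae_mem hμ
  have : PolishSpace (Set.Ici (0 : ℝ)) := isClosed_Ici.polishSpace
  have h_comap : σ.comap ((↑) : Set.Ici (0 : ℝ) → ℝ) = τ.comap (↑) := by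
    refine measure_eq_of_forall_integral_pow_eq invOneAdd_injective fun k => ?_
    have h_integral {μ : Measure ℝ} (hμ : ∀ᵐ u ∂μ, 0 ≤ u) :
        ∫ u, invOneAdd u ^ k ∂μ.comap (↑) = ∫ u, ((1 + u)⁻¹) ^ k ∂μ := by
      conv_rhs => rw [← h_restrict hμ, ← integral_subtype_comap measurableSet_Ici]
      rfl
    rw [h_integral hσ, h_integral hτ, heq]
  rw [← h_restrict hσ, ← h_restrict hτ, ← map_comap_subtype_coe measurableSet_Ici, h_comap,
    map_comap_subtype_coe measurableSet_Ici]

/-- A Stieltjes moment measure: a measure carried by `[0, ∞)` all of whose moments are finite. -/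
structure IsStieltjesMomentMeasure (μ : Measure ℝ) : Prop where
  measure_Iio : μ (Set.Iio 0) = 0
  integrable_pow : ∀ m : ℕ, Integrable (fun t => t ^ m) μ

theorem isFiniteMeasure_of_integrable_pow {μ : Measure ℝ}
    (hμ : ∀ m : ℕ, Integrable (fun t => t ^ m) μ) : IsFiniteMeasure μ :=
  (integrable_const_iff_isFiniteMeasure one_ne_zero).mp (by simpa using hμ 0)

theorem integrable_eval_of_integrable_pow {μ : Measure ℝ}
    (hμ : ∀ m : ℕ, Integrable (fun t => t ^ m) μ) (p : ℝ[X]) :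
    Integrable (fun t => p.eval t) μ := by
  simp only [Polynomial.eval_eq_sum_range]
  exact integrable_finsetSum _ fun i _ => (hμ i).const_mul _

theorem integral_eval_eq_of_integral_pow_eq {σ τ : Measure ℝ}
    (hσ : ∀ m : ℕ, Integrable (fun t => t ^ m) σ) (hτ : ∀ m : ℕ, Integrable (fun t => t ^ m) τ)
    (heq : ∀ m : ℕ, ∫ t, t ^ m ∂σ = ∫ t, t ^ m ∂τ) (p : ℝ[X]) :
    ∫ t, p.eval t ∂σ = ∫ t, p.eval t ∂τ := by
  simp only [Polynomial.eval_eq_sum_range]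
  rw [integral_finsetSum _ fun i _ => (hσ i).const_mul _,
    integral_finsetSum _ fun i _ => (hτ i).const_mul _]
  simp only [integral_const_mul, heq]

namespace IsStieltjesMomentMeasure

variable {μ : Measure ℝ}

theorem ae_nonneg (hμ : IsStieltjesMomentMeasure μ) : ∀ᵐ u ∂μ, 0 ≤ u := by
  simp only [ae_iff, not_le]
  exact hμ.measure_Iio

theorem isFiniteMeasure (hμ : IsStieltjesMomentMeasure μ) : IsFiniteMeasure μ :=
  isFiniteMeasure_of_integrable_pow hμ.integrable_pow

theorem integrable_eval (hμ : IsStieltjesMomentMeasure μ) (p : ℝ[X]) :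
    Integrable (fun t => p.eval t) μ :=
  integrable_eval_of_integrable_pow hμ.integrable_pow p

theorem add {σ τ : Measure ℝ} (hσ : IsStieltjesMomentMeasure σ) (hτ : IsStieltjesMomentMeasure τ) :
    IsStieltjesMomentMeasure (σ + τ) where
  measure_Iio := by simp [hσ.measure_Iio, hτ.measure_Iio]
  integrable_pow m := (hσ.integrable_pow m).add_measure (hτ.integrable_pow m)

theorem ae_abs_eval_mul_inv_one_add_pow_le (hμ : IsStieltjesMomentMeasure μ) (p : ℝ[X]) (k : ℕ) :
    ∀ᵐ u ∂μ, |p.eval u * ((1 + u)⁻¹) ^ k| ≤ |p.eval u| := by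
  filter_upwards [hμ.ae_nonneg] with u hu
  rw [abs_mul, abs_of_nonneg (a := ((1 + u)⁻¹) ^ k) (by positivity)]
  exact mul_le_of_le_one_right (abs_nonneg _)
    (pow_le_one₀ (by positivity) (inv_le_one_of_one_le₀ (by linarith)))

theorem integrable_eval_mul_inv_one_add_pow (hμ : IsStieltjesMomentMeasure μ) (p : ℝ[X]) (k : ℕ) :
    Integrable (fun u => p.eval u * ((1 + u)⁻¹) ^ k) μ :=
  (hμ.integrable_eval p).mono
    (p.continuous.measurable.mul (by fun_prop)).aestronglyMeasurable
    (hμ.ae_abs_eval_mul_inv_one_add_pow_le p k)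

theorem abs_integral_eval_mul_inv_one_add_pow_le (hμ : IsStieltjesMomentMeasure μ) (p : ℝ[X])
    (k : ℕ) : |∫ u, p.eval u * ((1 + u)⁻¹) ^ k ∂μ| ≤ ∫ u, |p.eval u| ∂μ :=
  abs_integral_le_integral_abs.trans <| integral_mono_ae
    (hμ.integrable_eval_mul_inv_one_add_pow p k).abs (hμ.integrable_eval p).abs
    (hμ.ae_abs_eval_mul_inv_one_add_pow_le p k)

theorem integral_eval_mul_inv_one_add_pow_succ (hμ : IsStieltjesMomentMeasure μ) {p q : ℝ[X]}
    (hpq : p = Polynomial.C (p.eval (-1)) + (1 + Polynomial.X) * q) (k : ℕ) :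
    ∫ u, p.eval u * ((1 + u)⁻¹) ^ (k + 1) ∂μ = p.eval (-1) * ∫ u, ((1 + u)⁻¹) ^ (k + 1) ∂μ
      + ∫ u, q.eval u * ((1 + u)⁻¹) ^ k ∂μ := by
  have h_inv : Integrable (fun u : ℝ => ((1 + u)⁻¹) ^ (k + 1)) μ := by
    simpa using hμ.integrable_eval_mul_inv_one_add_pow 1 (k + 1)
  rw [← integral_const_mul,
    ← integral_add (h_inv.const_mul _) (hμ.integrable_eval_mul_inv_one_add_pow q k)]
  refine integral_congr_ae ?_
  filter_upwards [hμ.ae_nonneg] with u hu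
  have h_eval : p.eval u = p.eval (-1) + (1 + u) * q.eval u := by
    simpa using congrArg (Polynomial.eval u) hpq
  have h_ne : 1 + u ≠ 0 := by positivity
  rw [h_eval, pow_succ]
  field_simp

end IsStieltjesMomentMeasure

theorem exists_eq_C_eval_neg_one_add_mul (p : ℝ[X]) :
    ∃ q : ℝ[X], p = Polynomial.C (p.eval (-1)) + (1 + Polynomial.X) * q := by
  obtain ⟨q, hq⟩ := Polynomial.X_sub_C_dvd_sub_C_eval (p := p) (a := -1)
  refine ⟨q, ?_⟩
  rw [← sub_eq_iff_eq_add', hq]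
  simp [add_comm]

theorem exists_abs_eval_neg_one_le_mul_integral {σ τ : Measure ℝ} (hσ : IsStieltjesMomentMeasure σ)
    (hτ : IsStieltjesMomentMeasure τ) (heq : ∀ m : ℕ, ∫ t, t ^ m ∂σ = ∫ t, t ^ m ∂τ) (hne : σ ≠ τ) :
    ∃ K > 0, ∀ p : ℝ[X], |p.eval (-1)| ≤ K * ∫ u, |p.eval u| ∂(σ + τ) := by
  have := hσ.isFiniteMeasure
  have := hτ.isFiniteMeasure
  by_contra! h_unbounded
  have h_all (k : ℕ) : ∀ p : ℝ[X],
      ∫ u, p.eval u * ((1 + u)⁻¹) ^ k ∂σ = ∫ u, p.eval u * ((1 + u)⁻¹) ^ k ∂τ := by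
    induction k with
    | zero =>
      simpa using integral_eval_eq_of_integral_pow_eq hσ.integrable_pow hτ.integrable_pow heq
    | succ k ih =>
      have h_split (p : ℝ[X]) : ∫ u, p.eval u * ((1 + u)⁻¹) ^ (k + 1) ∂σ
          - ∫ u, p.eval u * ((1 + u)⁻¹) ^ (k + 1) ∂τ = p.eval (-1) *
            (∫ u, ((1 + u)⁻¹) ^ (k + 1) ∂σ - ∫ u, ((1 + u)⁻¹) ^ (k + 1) ∂τ) := by
        obtain ⟨q, hq⟩ := exists_eq_C_eval_neg_one_add_mul p
        rw [hσ.integral_eval_mul_inv_one_add_pow_succ hq,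
          hτ.integral_eval_mul_inv_one_add_pow_succ hq, ih q]
        ring
      suffices h_zero : ∫ u, ((1 + u)⁻¹) ^ (k + 1) ∂σ - ∫ u, ((1 + u)⁻¹) ^ (k + 1) ∂τ = 0 by
        intro p
        rw [← sub_eq_zero, h_split, h_zero, mul_zero]
      by_contra h_ne
      obtain ⟨p, hp⟩ := h_unbounded _ (inv_pos.mpr (abs_pos.mpr h_ne))
      refine hp.not_ge ?_
      rw [le_inv_mul_iff₀' (abs_pos.mpr h_ne), ← abs_mul, ← h_split,
        integral_add_measure (hσ.integrable_eval p).abs (hτ.integrable_eval p).abs]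
      exact (abs_sub _ _).trans (add_le_add (hσ.abs_integral_eval_mul_inv_one_add_pow_le p _)
        (hτ.abs_integral_eval_mul_inv_one_add_pow_le p _))
  exact hne (measure_eq_of_forall_integral_inv_one_add_pow_eq hσ.ae_nonneg hτ.ae_nonneg
    fun k => by simpa using h_all k 1)

/-- The polynomial obtained from `p` by replacing each complex root `r` by `‖r‖`. It is smaller
than `p` on the non-negative half-line and larger on the negative one. -/
def reflectRoots (p : ℝ[X]) : ℝ[X] :=
  Polynomial.C p.leadingCoeff *
    ((p.aroots ℂ).map fun r => Polynomial.X - Polynomial.C ‖r‖).prod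

theorem norm_aeval_eq_prod_aroots (p : ℝ[X]) (z : ℂ) :
    ‖Polynomial.aeval z p‖ = |p.leadingCoeff| * ((p.aroots ℂ).map fun r => ‖z - r‖).prod := by
  rw [← Polynomial.eval_map_algebraMap, (IsAlgClosed.splits _).eval_eq_prod_roots, norm_mul,
    Polynomial.leadingCoeff_map, norm_algebraMap', Real.norm_eq_abs, ← Polynomial.aroots_def]
  congr 1
  exact (map_multiset_prod (normHom (α := ℂ)) _).trans (by rw [Multiset.map_map]; rfl)

theorem abs_eval_reflectRoots (p : ℝ[X]) (u : ℝ) :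
    |(reflectRoots p).eval u| = |p.leadingCoeff| * ((p.aroots ℂ).map fun r => |u - ‖r‖|).prod := by
  rw [reflectRoots, Polynomial.eval_mul, Polynomial.eval_C, abs_mul,
    Polynomial.eval_multiset_prod, Multiset.map_map]
  congr 1
  exact (map_multiset_prod (absHom (α := ℝ)) _).trans (by simp [absHom])

theorem abs_eval_reflectRoots_le (p : ℝ[X]) {u : ℝ} (hu : 0 ≤ u) :
    |(reflectRoots p).eval u| ≤ |p.eval u| := by
  have h_norm : ‖Polynomial.aeval (u : ℂ) p‖ = |p.eval u| := by
    rw [← Complex.coe_algebraMap, Polynomial.aeval_algebraMap_apply_eq_algebraMap_eval,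
      norm_algebraMap', Real.norm_eq_abs]
  rw [abs_eval_reflectRoots, ← h_norm, norm_aeval_eq_prod_aroots]
  gcongr
  refine Multiset.prod_map_le_prod_map₀ _ _ (fun r _ => abs_nonneg _) fun r _ => ?_
  simpa only [Complex.norm_real, Real.norm_of_nonneg hu] using abs_norm_sub_norm_le (u : ℂ) r

theorem norm_aeval_le_abs_eval_reflectRoots_neg (p : ℝ[X]) {z : ℂ} {R : ℝ} (hz : ‖z‖ ≤ R) :
    ‖Polynomial.aeval z p‖ ≤ |(reflectRoots p).eval (-R)| := by
  rw [abs_eval_reflectRoots, norm_aeval_eq_prod_aroots]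
  gcongr
  refine Multiset.prod_map_le_prod_map₀ _ _ (fun r _ => norm_nonneg _) fun r _ => ?_
  calc ‖z - r‖ ≤ R + ‖r‖ := (norm_sub_le z r).trans (by gcongr)
    _ = -(-R - ‖r‖) := by ring
    _ ≤ |-R - ‖r‖| := neg_le_abs _

theorem abs_eval_le_abs_eval_reflectRoots_neg (p : ℝ[X]) {t R : ℝ} (ht : |t| ≤ R) :
    |p.eval t| ≤ |(reflectRoots p).eval (-R)| := by
  simpa only [← Complex.coe_algebraMap, Polynomial.aeval_algebraMap_apply_eq_algebraMap_eval,
    norm_algebraMap', Real.norm_eq_abs] using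
    norm_aeval_le_abs_eval_reflectRoots_neg p (z := t) (R := R) (by simpa using ht)

section BoundedEvaluation

variable {μ : Measure ℝ} {K : ℝ}

theorem abs_eval_neg_one_mul_abs_eval_le (hμ : IsStieltjesMomentMeasure μ) (hK : 0 ≤ K)
    (hB : ∀ p : ℝ[X], |p.eval (-1)| ≤ K * ∫ u, |p.eval u| ∂μ) (d q : ℝ[X]) {t : ℝ}
    (ht : |t| ≤ 1) : |d.eval (-1)| * |q.eval t| ≤ K * ∫ u, |(d * q).eval u| ∂μ :=
  calc |d.eval (-1)| * |q.eval t| ≤ |d.eval (-1)| * |(reflectRoots q).eval (-1)| := by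
        exact mul_le_mul_of_nonneg_left
          (abs_eval_le_abs_eval_reflectRoots_neg q ht) (abs_nonneg _)
    _ = |(d * reflectRoots q).eval (-1)| := by rw [Polynomial.eval_mul, abs_mul]
    _ ≤ K * ∫ u, |(d * reflectRoots q).eval u| ∂μ := hB _
    _ ≤ K * ∫ u, |(d * q).eval u| ∂μ := by
        refine mul_le_mul_of_nonneg_left (integral_mono_ae (hμ.integrable_eval _).abs
          (hμ.integrable_eval _).abs ?_) hK
        filter_upwards [hμ.ae_nonneg] with u hu
        simp only [Polynomial.eval_mul, abs_mul]
        exact mul_le_mul_of_nonneg_left (abs_eval_reflectRoots_le q hu) (abs_nonneg _)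

theorem abs_eval_le_mul_integral (hμ : IsStieltjesMomentMeasure μ) (hK : 0 ≤ K)
    (hB : ∀ p : ℝ[X], |p.eval (-1)| ≤ K * ∫ u, |p.eval u| ∂μ) (p : ℝ[X]) {t : ℝ}
    (ht : |t| ≤ 1) : |p.eval t| ≤ K * ∫ u, |p.eval u| ∂μ := by
  simpa using abs_eval_neg_one_mul_abs_eval_le hμ hK hB 1 p ht

theorem abs_eval_le_abs_sub_mul_integral (hμ : IsStieltjesMomentMeasure μ) (hK : 0 ≤ K)
    (hB : ∀ p : ℝ[X], |p.eval (-1)| ≤ K * ∫ u, |p.eval u| ∂μ) {p : ℝ[X]} {s t : ℝ}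
    (hps : p.IsRoot s) (hs : 0 ≤ s) (ht : |t| ≤ 1) :
    |p.eval t| ≤ |t - s| * (K * ∫ u, |p.eval u| ∂μ) := by
  obtain ⟨q, rfl⟩ := Polynomial.dvd_iff_isRoot.mpr hps
  have h_one_le : 1 ≤ |(Polynomial.X - Polynomial.C s).eval (-1)| := by
    rw [Polynomial.eval_sub, Polynomial.eval_X, Polynomial.eval_C]
    exact le_abs.mpr (.inr (by linarith))
  rw [Polynomial.eval_mul, abs_mul, Polynomial.eval_sub, Polynomial.eval_X, Polynomial.eval_C]
  gcongr
  exact (le_mul_of_one_le_left (abs_nonneg _) h_one_le).trans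
    (abs_eval_neg_one_mul_abs_eval_le hμ hK hB _ q ht)

/-- At a point `u < ε` where `p` is negative, `p u` is small since `p` vanishes somewhere in
`[u, ε]`. -/
theorem abs_eval_sub_eval_le_of_nonneg_on_Ici (hμ : IsStieltjesMomentMeasure μ) (hK : 0 ≤ K)
    (hB : ∀ p : ℝ[X], |p.eval (-1)| ≤ K * ∫ u, |p.eval u| ∂μ) {ε : ℝ} (hε₀ : 0 ≤ ε)
    (hε₁ : ε ≤ 1) {p : ℝ[X]} (hp : ∀ u, ε ≤ u → 0 ≤ p.eval u) {u : ℝ} (hu : 0 ≤ u) :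
    |p.eval u| - p.eval u ≤ 2 * ε * (K * ∫ v, |p.eval v| ∂μ) := by
  rcases le_or_gt 0 (p.eval u) with h_nonneg | h_neg
  · rw [abs_of_nonneg h_nonneg, sub_self]
    positivity
  · have huε : u < ε := lt_of_not_ge fun h => (hp u h).not_gt h_neg
    obtain ⟨s, ⟨hus, hsε⟩, hs⟩ :=
      intermediate_value_Icc huε.le p.continuous.continuousOn ⟨h_neg.le, hp ε le_rfl⟩
    have h_dist : |u - s| ≤ ε := abs_le.mpr ⟨by linarith, by linarith⟩
    have h_abs : |p.eval u| ≤ ε * (K * ∫ v, |p.eval v| ∂μ) :=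
      (abs_eval_le_abs_sub_mul_integral hμ hK hB hs (hu.trans hus)
        (by rw [abs_of_nonneg hu]; linarith)).trans (by gcongr)
    linarith [neg_le_abs (p.eval u)]

theorem integral_abs_eval_le_two_mul_integral_eval (hμ : IsStieltjesMomentMeasure μ) (hK : 0 ≤ K)
    (hB : ∀ p : ℝ[X], |p.eval (-1)| ≤ K * ∫ u, |p.eval u| ∂μ) {ε : ℝ} (hε₀ : 0 ≤ ε)
    (hε₁ : ε ≤ 1) (hεK : 4 * ε * K * μ.real Set.univ ≤ 1) {p : ℝ[X]}
    (hp : ∀ u, ε ≤ u → 0 ≤ p.eval u) : ∫ u, |p.eval u| ∂μ ≤ 2 * ∫ u, p.eval u ∂μ := by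
  have := hμ.isFiniteMeasure
  have h_int : 0 ≤ ∫ u, |p.eval u| ∂μ := integral_nonneg fun _ => abs_nonneg _
  have h_sub : ∫ u, |p.eval u| ∂μ - ∫ u, p.eval u ∂μ
      ≤ μ.real Set.univ * (2 * ε * (K * ∫ u, |p.eval u| ∂μ)) := by
    rw [← integral_sub (hμ.integrable_eval p).abs (hμ.integrable_eval p), ← smul_eq_mul,
      ← integral_const]
    refine integral_mono_ae ((hμ.integrable_eval p).abs.sub (hμ.integrable_eval p))
      (integrable_const _) ?_
    filter_upwards [hμ.ae_nonneg] with u hu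
      using abs_eval_sub_eval_le_of_nonneg_on_Ici hμ hK hB hε₀ hε₁ hp hu
  linarith [mul_le_mul_of_nonneg_right hεK h_int]

theorem exists_mul_eval_le_integral (hμ : IsStieltjesMomentMeasure μ) (hK : 0 < K)
    (hB : ∀ p : ℝ[X], |p.eval (-1)| ≤ K * ∫ u, |p.eval u| ∂μ) :
    ∃ ε > 0, ε < 1 ∧ ∃ c > 0, ∀ s, |s| ≤ 1 → ∀ p : ℝ[X], (∀ u, ε ≤ u → 0 ≤ p.eval u) →
      c * p.eval s ≤ ∫ u, p.eval u ∂μ := by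
  have h_mass : 0 ≤ 4 * K * μ.real Set.univ := by positivity
  have hε₁ : (4 * K * μ.real Set.univ + 2)⁻¹ < 1 := inv_lt_one_of_one_lt₀ (by linarith)
  refine ⟨(4 * K * μ.real Set.univ + 2)⁻¹, by positivity, hε₁, (2 * K)⁻¹, by positivity,
    fun s hs p hp => ?_⟩
  have h_abs := integral_abs_eval_le_two_mul_integral_eval hμ hK.le hB (by positivity) hε₁.le
    (by field_simp; linarith) hp
  rw [inv_mul_le_iff₀ (by positivity)]
  calc p.eval s ≤ K * ∫ u, |p.eval u| ∂μ :=
        (le_abs_self _).trans (abs_eval_le_mul_integral hμ hK.le hB p hs)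
    _ ≤ K * (2 * ∫ u, p.eval u ∂μ) := by gcongr
    _ = 2 * K * ∫ u, p.eval u ∂μ := by ring

end BoundedEvaluation

/-- The functional `p ↦ ∫ p dμ` on polynomials. -/
def momentFunctional (μ : Measure ℝ) (hμ : ∀ m : ℕ, Integrable (fun t => t ^ m) μ) :
    ℝ[X] →ₗ[ℝ] ℝ where
  toFun p := ∫ u, p.eval u ∂μ
  map_add' p q := by
    simp only [Polynomial.eval_add]
    exact integral_add (integrable_eval_of_integrable_pow hμ p)
      (integrable_eval_of_integrable_pow hμ q)
  map_smul' c p := by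
    simp only [Polynomial.eval_smul, integral_smul, RingHom.id_apply]

theorem exists_measure_le_singleton {ν : Measure ℝ} (hν : ∀ m : ℕ, Integrable (fun t => t ^ m) ν)
    {K : Set ℝ} (hK : IsClosed K) {s δ : ℝ} (hs : s ∈ K) (hδ : 0 ≤ δ)
    (hle : ∀ p : ℝ[X], (∀ u ∈ K, 0 ≤ p.eval u) → δ * p.eval s ≤ ∫ u, p.eval u ∂ν) :
    ∃ σ : Measure ℝ, σ Kᶜ = 0 ∧ ENNReal.ofReal δ ≤ σ {s} ∧
      ∀ p : ℝ[X], Integrable (fun u => p.eval u) σ ∧ ∫ u, p.eval u ∂σ = ∫ u, p.eval u ∂ν := by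
  obtain ⟨ρ, hρK, hρ⟩ := exists_measure_of_forall_nonneg_on hK
    (momentFunctional ν hν - δ • Polynomial.leval s) fun p hp => sub_nonneg.mpr (hle p hp)
  refine ⟨ρ + ENNReal.ofReal δ • .dirac s, ?_, ?_, fun p => ?_⟩
  · simp [hρK, hs]
  · simp
  · obtain ⟨hρ_int, hρ_eq⟩ := hρ p
    have h_dirac : Integrable (fun u => p.eval u) (ENNReal.ofReal δ • .dirac s) :=
      (integrable_dirac (by simp)).smul_measure ENNReal.ofReal_ne_top
    refine ⟨hρ_int.add_measure h_dirac, ?_⟩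
    rw [integral_add_measure hρ_int h_dirac, hρ_eq, integral_smul_measure, integral_dirac,
      ENNReal.toReal_ofReal hδ]
    exact sub_add_cancel (∫ u, p.eval u ∂ν) (δ * p.eval s)

theorem exists_mul_eval_le_integral_of_not_determinate {ν : Measure ℝ}
    (hν : IsStieltjesMomentMeasure ν) (h : ¬ StieltjesDeterminate ν) :
    ∃ ε > 0, ε < 1 ∧ ∃ δ > 0, ∀ s, |s| ≤ 1 → ∀ p : ℝ[X], (∀ u, ε ≤ u → 0 ≤ p.eval u) →
      δ * p.eval s ≤ ∫ u, p.eval u ∂ν := by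
  obtain ⟨τ, ⟨hτ_null, hτ_int, hτ_eq⟩, hne⟩ : ∃ τ ∈ WSti ν, τ ≠ ν := by
    simpa [StieltjesDeterminate] using h
  have hτ : IsStieltjesMomentMeasure τ := ⟨hτ_null, hτ_int⟩
  obtain ⟨K, hK, hB⟩ := exists_abs_eval_neg_one_le_mul_integral hτ hν hτ_eq hne
  obtain ⟨ε, hε, hε₁, c, hc, hle⟩ := exists_mul_eval_le_integral (hτ.add hν) hK hB
  refine ⟨ε, hε, hε₁, c / 2, half_pos hc, fun s hs p hp => ?_⟩
  have h_sum := hle s hs p hp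
  rw [integral_add_measure (hτ.integrable_eval p) (hν.integrable_eval p),
    integral_eval_eq_of_integral_pow_eq hτ_int hν.integrable_pow hτ_eq p] at h_sum
  linarith

theorem exists_mem_WSti_pos_singleton {ν : Measure ℝ} (hν : IsStieltjesMomentMeasure ν)
    (h : ¬ StieltjesDeterminate ν) :
    ∃ ε > 0, ε < 1 ∧ ∀ s ∈ Set.Icc ε 1, ∃ σ ∈ WSti ν, σ (Set.Iio ε) = 0 ∧ 0 < σ {s} := by
  obtain ⟨ε, hε, hε₁, δ, hδ, hle⟩ := exists_mul_eval_le_integral_of_not_determinate hν h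
  refine ⟨ε, hε, hε₁, fun s hs => ?_⟩
  obtain ⟨σ, hσ_null, hσ_atom, hσ⟩ := exists_measure_le_singleton hν.integrable_pow
    isClosed_Ici hs.1 hδ.le (hle s (abs_le.mpr ⟨by linarith [hs.1], hs.2⟩))
  rw [Set.compl_Ici] at hσ_null
  have hσ_mem : σ ∈ WSti ν := ⟨measure_mono_null (Set.Iio_subset_Iio hε.le) hσ_null,
    fun m => by simpa using (hσ (Polynomial.X ^ m)).1,
    fun m => by simpa using (hσ (Polynomial.X ^ m)).2⟩
  exact ⟨σ, hσ_mem, hσ_null, (ENNReal.ofReal_pos.mpr hδ).trans_le hσ_atom⟩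

theorem countable_setOf_exists_pos_singleton {α : Type*} [MeasurableSpace α]
    [MeasurableSingletonClass α] {S : Set (Measure α)} (hS : S.Countable)
    (hfin : ∀ σ ∈ S, SFinite σ) : {a | ∃ σ ∈ S, 0 < σ {a}}.Countable := by
  have h_union : {a | ∃ σ ∈ S, 0 < σ {a}} = ⋃ σ ∈ S, {a | 0 < σ {a}} := by
    ext a
    simp only [Set.mem_ofPred_eq, Set.mem_iUnion, exists_prop]
  rw [h_union]
  refine hS.biUnion fun σ hσ => ?_
  have := hfin σ hσ
  exact Measure.countable_meas_level_set_pos (g := id) measurable_id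

theorem exists_not_countable_setOf_mem_WSti {ν : Measure ℝ} (hν : IsStieltjesMomentMeasure ν)
    (h : ¬ StieltjesDeterminate ν) :
    ∃ ε > 0, ¬ {σ ∈ WSti ν | σ (Set.Iio ε) = 0}.Countable := by
  obtain ⟨ε, hε, hε₁, h_atom⟩ := exists_mem_WSti_pos_singleton hν h
  refine ⟨ε, hε, fun h_countable => Cardinal.aleph0_lt_continuum.not_ge ?_⟩
  rw [← Cardinal.mk_Icc_real hε₁, Cardinal.le_aleph0_iff_set_countable]
  refine (countable_setOf_exists_pos_singleton h_countable fun σ hσ => ?_).mono fun s hs => ?_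
  · have := isFiniteMeasure_of_integrable_pow hσ.1.2.1
    infer_instance
  · obtain ⟨σ, hσ_mem, hσ_null, hσ_pos⟩ := h_atom s hs
    exact ⟨σ, ⟨hσ_mem, hσ_null⟩, hσ_pos⟩

theorem lintegral_inv_ofReal_pow_lt_top {σ : Measure ℝ} [IsFiniteMeasure σ] {ε : ℝ} (hε : 0 < ε)
    (hσ : σ (Set.Iio ε) = 0) (k : ℕ) : ∫⁻ u, ((ENNReal.ofReal u) ^ k)⁻¹ ∂σ < ⊤ := by
  have h_ae : ∀ᵐ u ∂σ, ε ≤ u := by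
    simp only [ae_iff, not_le]
    exact hσ
  calc ∫⁻ u, ((ENNReal.ofReal u) ^ k)⁻¹ ∂σ ≤ ∫⁻ _, ((ENNReal.ofReal ε) ^ k)⁻¹ ∂σ := by
        refine lintegral_mono_ae ?_
        filter_upwards [h_ae] with u hu
        gcongr
    _ < ⊤ := by
        rw [lintegral_const]
        refine ENNReal.mul_lt_top ?_ (measure_lt_top σ _)
        exact ENNReal.inv_lt_top.mpr (ENNReal.pow_pos (ENNReal.ofReal_pos.mpr hε) k)

theorem statement12 (ν : Measure ℝ) (hpos : ν (Set.Iio 0) = 0)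
    (hmom : ∀ m : ℕ, Integrable (fun t => t ^ m) ν)
    (hindet : ¬ StieltjesDeterminate ν) :
    ∃ S : Set (Measure ℝ), ¬ S.Countable ∧
      ∀ σ ∈ S, σ ∈ WSti ν ∧ ∀ k : ℕ, (∫⁻ u, ((ENNReal.ofReal u) ^ k)⁻¹ ∂σ) < ⊤ := by
  obtain ⟨ε, hε, h_uncountable⟩ := exists_not_countable_setOf_mem_WSti ⟨hpos, hmom⟩ hindet
  refine ⟨_, h_uncountable, fun σ ⟨hσ_mem, hσ_null⟩ => ⟨hσ_mem, ?_⟩⟩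
  have := isFiniteMeasure_of_integrable_pow hσ_mem.2.1
  exact lintegral_inv_ofReal_pow_lt_top hε hσ_null
end
end

section
/- Let T : ℂ[x_1,…,x_d] → ℂ be a pseudo-positive definite functional. If each component functional T_{k,l} : ℂ[t] → ℂ is determined in the sense of Stieltjes (i.e. there is exactly one non-negative measure on [0,∞) whose moments are T_{k,l}(t^m), m ∈ ℕ₀), then there exists at most one pseudo-positive signed moment measure μ on ℝ^d with T(f) = ∫_{ℝ^d} f dμ for all polynomials f. -/
open MeasureTheory MvPolynomial Metric
open scoped ComplexOrder ENNReal

noncomputable section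

/-! Pseudo-positivity and the Riesz representation theorem turn `h ↦ ∫ h(|x|²) Y_{k,l}(x) dμ(x)`
into integration against a nonnegative measure on `[0, ∞)` with moments `T_{k,l}(t^m)`. If `T_{k,l}`
is determined, this measure does not depend on the representing measure `μ`, so neither do the
integrals of `h(|x|²) |x|^{2j} Y_{k,l}(x)` for bounded `h`, polynomial or not. The functions
`|x|^{2j} Y_{k,l}` span all polynomials (Gauss): since
`Δ(|x|^{2j+2} H) = 2(j+1)(2j+2k+d) |x|^{2j} H` for `H` harmonic of degree `k`, one can subtract
from a homogeneous polynomial a combination of such functions with the same Laplacian. Taking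
`h(t) = (1+t)^{-m}` shows that `μ` is determined on the bounded functions `P(x) / (1+|x|²)^m`, a
point-separating algebra, and hence determined. -/

section PolynomialLaplacian

variable {σ : Type*} [Fintype σ]

section CommRing

variable (R : Type*) [CommRing R]

/-- The Laplacian `∑ i, ∂ᵢ²` as an algebraic operator on polynomials. -/
def polyLaplacian : MvPolynomial σ R →ₗ[R] MvPolynomial σ R :=
  ∑ i, (pderiv i).toLinearMap ∘ₗ (pderiv i).toLinearMap

variable {R}

lemma polyLaplacian_apply (P : MvPolynomial σ R) :
    polyLaplacian R P = ∑ i, pderiv i (pderiv i P) := by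
  simp [polyLaplacian, LinearMap.sum_apply]

lemma isHomogeneous_polyLaplacian {n : ℕ} {P : MvPolynomial σ R} (hP : P.IsHomogeneous n) :
    (polyLaplacian R P).IsHomogeneous (n - 2) := by
  rw [polyLaplacian_apply]
  exact IsHomogeneous.sum _ _ _ fun i _ => hP.pderiv.pderiv

lemma polyLaplacian_eq_zero_of_isHomogeneous {n : ℕ} (hn : n < 2) {P : MvPolynomial σ R}
    (hP : P.IsHomogeneous n) : polyLaplacian R P = 0 := by
  rw [polyLaplacian_apply]
  refine Finset.sum_eq_zero fun i _ => ?_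
  have hconst : (pderiv i P).IsHomogeneous 0 := by
    simpa [show n - 1 = 0 by lia] using hP.pderiv (i := i)
  rw [totalDegree_eq_zero_iff_eq_C.1 ((totalDegree_zero_iff_isHomogeneous _).2 hconst), pderiv_C]

lemma isHomogeneous_psum (n : ℕ) : (psum σ R n).IsHomogeneous n :=
  IsHomogeneous.sum _ _ _ fun i _ => isHomogeneous_X_pow i n

lemma pderiv_psum_two (i : σ) : pderiv i (psum σ R 2) = 2 * X i := by
  classical
  simp [psum, pderiv_X, Pi.single_apply]

lemma polyLaplacian_psum_two_mul {n : ℕ} {P : MvPolynomial σ R} (hP : P.IsHomogeneous n) :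
    polyLaplacian R (psum σ R 2 * P) =
      (2 * Fintype.card σ + 4 * n : ℕ) • P + psum σ R 2 * polyLaplacian R P := by
  have hterm (i : σ) : pderiv i (pderiv i (psum σ R 2 * P)) =
      2 * P + 4 * (X i * pderiv i P) + psum σ R 2 * pderiv i (pderiv i P) := by
    have htwo : pderiv i (2 : MvPolynomial σ R) = 0 := (pderiv i).map_natCast 2
    simp only [pderiv_mul, map_add, pderiv_psum_two, pderiv_X_self, htwo]
    ring
  simp only [polyLaplacian_apply, hterm, Finset.sum_add_distrib, ← Finset.mul_sum,
    hP.sum_X_mul_pderiv, Finset.sum_const, Finset.card_univ, nsmul_eq_mul]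
  push_cast
  ring

lemma polyLaplacian_psum_two_pow_succ_mul {k : ℕ} {H : MvPolynomial σ R}
    (hH : H.IsHomogeneous k) (hharm : polyLaplacian R H = 0) (j : ℕ) :
    polyLaplacian R (psum σ R 2 ^ (j + 1) * H) =
      (2 * (j + 1) * (2 * j + 2 * k + Fintype.card σ) : ℕ) • (psum σ R 2 ^ j * H) := by
  induction j with
  | zero =>
    rw [zero_add, pow_one, polyLaplacian_psum_two_mul hH, hharm]
    simp only [nsmul_eq_mul]
    push_cast
    ring
  | succ j ih =>
    have hhom : (psum σ R 2 ^ (j + 1) * H).IsHomogeneous (2 * (j + 1) + k) :=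
      ((isHomogeneous_psum 2).pow _).mul hH
    rw [pow_succ', mul_assoc, polyLaplacian_psum_two_mul hhom, ih]
    simp only [nsmul_eq_mul]
    push_cast
    ring

end CommRing

section Field

variable (σ) (K : Type*) [Field K]

/-- The space of polynomials `∑ |x|^{2j} H_j` with `H_j` harmonic and homogeneous of degree
`n - 2j`; here `|x|²` is encoded as the power sum `psum σ K 2`. -/
def gaussSubmodule (n : ℕ) : Submodule K (MvPolynomial σ K) :=
  Submodule.span K {P | ∃ (j k : ℕ) (H : MvPolynomial σ K),
    2 * j + k = n ∧ H.IsHomogeneous k ∧ polyLaplacian K H = 0 ∧ P = psum σ K 2 ^ j * H}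

lemma gaussSubmodule_le_homogeneousSubmodule (n : ℕ) :
    gaussSubmodule σ K n ≤ homogeneousSubmodule σ K n := by
  rw [gaussSubmodule, Submodule.span_le]
  rintro _ ⟨j, k, H, rfl, hH, -, rfl⟩
  exact ((isHomogeneous_psum 2).pow j).mul hH

variable {σ K}

lemma mem_gaussSubmodule_of_harmonic {n : ℕ} {H : MvPolynomial σ K} (hH : H.IsHomogeneous n)
    (hharm : polyLaplacian K H = 0) : H ∈ gaussSubmodule σ K n :=
  Submodule.subset_span ⟨0, n, H, by simp, hH, hharm, by simp⟩

variable [CharZero K] [Nonempty σ]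

lemma gaussSubmodule_le_map_polyLaplacian (n : ℕ) :
    gaussSubmodule σ K n ≤ (gaussSubmodule σ K (n + 2)).map (polyLaplacian K) := by
  conv_lhs => rw [gaussSubmodule]
  rw [Submodule.span_le]
  rintro _ ⟨j, k, H, rfl, hH, hharm, rfl⟩
  set c : ℕ := 2 * (j + 1) * (2 * j + 2 * k + Fintype.card σ) with hc
  have hc0 : (c : K) ≠ 0 := Nat.cast_ne_zero.2 (by have := Fintype.card_pos (α := σ); positivity)
  refine ⟨(c : K)⁻¹ • (psum σ K 2 ^ (j + 1) * H), Submodule.smul_mem _ _ <|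
    Submodule.subset_span ⟨j + 1, k, H, by ring, hH, hharm, rfl⟩, ?_⟩
  rw [map_smul, polyLaplacian_psum_two_pow_succ_mul hH hharm, ← hc, ← Nat.cast_smul_eq_nsmul K,
    inv_smul_smul₀ hc0]

theorem gaussSubmodule_eq_homogeneousSubmodule (n : ℕ) :
    gaussSubmodule σ K n = homogeneousSubmodule σ K n := by
  refine (gaussSubmodule_le_homogeneousSubmodule σ K n).antisymm ?_
  induction n using Nat.strong_induction_on with
  | _ n ih =>
    intro P hP
    rcases lt_or_ge n 2 with hn | hn
    · exact mem_gaussSubmodule_of_harmonic hP (polyLaplacian_eq_zero_of_isHomogeneous hn hP)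
    · obtain ⟨m, rfl⟩ := Nat.exists_eq_add_of_le' hn
      have hΔP : polyLaplacian K P ∈ gaussSubmodule σ K m :=
        ih m (by lia) (isHomogeneous_polyLaplacian hP)
      obtain ⟨Q, hQ, hΔQ⟩ := gaussSubmodule_le_map_polyLaplacian m hΔP
      have hQhom : Q.IsHomogeneous (m + 2) := gaussSubmodule_le_homogeneousSubmodule σ K _ hQ
      have hharm : polyLaplacian K (P - Q) = 0 := by rw [map_sub, hΔQ, sub_self]
      simpa using add_mem (mem_gaussSubmodule_of_harmonic (hP.sub hQhom) hharm) hQ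

end Field

end PolynomialLaplacian

namespace HarmonicBasis

theorem mem_span_psum_two_pow_mul_Y {d : ℕ} [NeZero d] (B : HarmonicBasis d)
    (P : MvPolynomial (Fin d) ℝ) :
    P ∈ Submodule.span ℝ {Q | ∃ (j k : ℕ) (l : Fin (B.a k)),
      Q = psum (Fin d) ℝ 2 ^ j * B.Y k l} := by
  have hhom (n : ℕ) : homogeneousSubmodule (Fin d) ℝ n ≤ Submodule.span ℝ
      {Q | ∃ (j k : ℕ) (l : Fin (B.a k)), Q = psum (Fin d) ℝ 2 ^ j * B.Y k l} := by
    rw [← gaussSubmodule_eq_homogeneousSubmodule, gaussSubmodule, Submodule.span_le]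
    rintro _ ⟨j, k, H, -, hH, hharm, rfl⟩
    have hHY := B.complete k H (by rwa [polyLaplacian_apply] at hharm) hH
    refine (Submodule.map_span_le (LinearMap.mulLeft ℝ (psum (Fin d) ℝ 2 ^ j)) _ _).2 ?_
      ⟨H, hHY, rfl⟩
    rintro _ ⟨l, rfl⟩
    exact Submodule.subset_span ⟨j, k, l, rfl⟩
  rw [← sum_homogeneousComponent P]
  exact sum_mem fun n _ => hhom n (homogeneousComponent_isHomogeneous n P)

end HarmonicBasis

section SignedMeasureIntegral

variable {α G : Type*} [MeasurableSpace α] [NormedAddCommGroup G] {μ : SignedMeasure α}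

lemma integrable_totalVariation_iff {f : α → G} : Integrable f μ.totalVariation ↔
    Integrable f μ.toJordanDecomposition.posPart ∧
      Integrable f μ.toJordanDecomposition.negPart :=
  integrable_add_measure

variable [NormedSpace ℝ G]

lemma sInt_add {f g : α → G} (hf : Integrable f μ.totalVariation)
    (hg : Integrable g μ.totalVariation) :
    sInt μ (fun x => f x + g x) = sInt μ f + sInt μ g := by
  rw [integrable_totalVariation_iff] at hf hg
  rw [sInt, integral_add hf.1 hg.1, integral_add hf.2 hg.2, add_sub_add_comm, sInt, sInt]

lemma sInt_smul (c : ℝ) (f : α → G) : sInt μ (fun x => c • f x) = c • sInt μ f := by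
  simp only [sInt, integral_smul, smul_sub]

lemma sInt_ofReal (f : α → ℝ) : sInt μ (fun x => (f x : ℂ)) = (sInt μ f : ℝ) := by
  simp only [sInt, integral_complex_ofReal, Complex.ofReal_sub]

open scoped BoundedContinuousFunction in
theorem signedMeasure_ext_of_forall_mem_subalgebra_sInt_eq {X 𝕜 : Type*} [RCLike 𝕜]
    [MeasurableSpace X] [TopologicalSpace X] [PolishSpace X] [BorelSpace X]
    {μ₁ μ₂ : SignedMeasure X} {A : StarSubalgebra 𝕜 (X →ᵇ 𝕜)}
    (hA : (A.map (BoundedContinuousFunction.toContinuousMapStarₐ 𝕜)).SeparatesPoints)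
    (heq : ∀ g ∈ A, sInt μ₁ g = sInt μ₂ g) : μ₁ = μ₂ := by
  have hcross : μ₁.toJordanDecomposition.posPart + μ₂.toJordanDecomposition.negPart =
      μ₂.toJordanDecomposition.posPart + μ₁.toJordanDecomposition.negPart := by
    refine ext_of_forall_mem_subalgebra_integral_eq_of_polish hA fun g hg => ?_
    rw [integral_add_measure (g.integrable _) (g.integrable _),
      integral_add_measure (g.integrable _) (g.integrable _)]
    exact sub_eq_sub_iff_add_eq_add.1 (heq g hg)
  rw [← SignedMeasure.toSignedMeasure_toJordanDecomposition μ₁,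
    ← SignedMeasure.toSignedMeasure_toJordanDecomposition μ₂,
    JordanDecomposition.toSignedMeasure, JordanDecomposition.toSignedMeasure,
    sub_eq_sub_iff_add_eq_add, ← Measure.toSignedMeasure_add, ← Measure.toSignedMeasure_add]
  simp only [hcross]

end SignedMeasureIntegral

section PushforwardWithDensity

variable {α : Type*} [MeasurableSpace α]

lemma integrable_withDensity_ofReal {ν : Measure α} {g Y : α → ℝ} (hY : Measurable Y)
    (hgY : Integrable (fun x => g x * Y x) ν) :
    Integrable g (ν.withDensity fun x => ENNReal.ofReal (Y x)) := by
  rw [integrable_withDensity_iff_integrable_smul' hY.ennreal_ofReal (by simp)]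
  -- `g` need not be measurable, but `g * max Y 0` is the restriction of `g * Y` to `{0 < Y}`.
  refine (hgY.indicator (measurableSet_lt (measurable_const (a := 0)) hY)).congr
    (ae_of_all _ fun x => ?_)
  by_cases hx : 0 < Y x
  · simp [hx, hx.le, mul_comm]
  · simp [hx, ENNReal.ofReal_of_nonpos (not_lt.1 hx)]

lemma integral_withDensity_ofReal_sub {ν : Measure α} {g Y : α → ℝ} (hY : Measurable Y)
    (hgY : Integrable (fun x => g x * Y x) ν) :
    (∫ x, g x ∂ν.withDensity fun x => ENNReal.ofReal (Y x)) -
      (∫ x, g x ∂ν.withDensity fun x => ENNReal.ofReal (-Y x)) = ∫ x, g x * Y x ∂ν := by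
  have hpos := integrable_withDensity_ofReal hY hgY
  have hneg := integrable_withDensity_ofReal (g := g) (Y := fun x => -Y x) hY.neg
    (by simpa using hgY.neg)
  rw [integrable_withDensity_iff_integrable_smul' (by fun_prop) (by simp)] at hpos hneg
  rw [integral_withDensity_eq_integral_toReal_smul (by fun_prop) (by simp),
    integral_withDensity_eq_integral_toReal_smul (by fun_prop) (by simp),
    ← integral_sub hpos hneg]
  refine integral_congr_ae (ae_of_all _ fun x => ?_)
  simp only [ENNReal.toReal_ofReal', smul_eq_mul, ← sub_mul, max_zero_sub_max_neg_zero_eq_self]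
  exact mul_comm _ _

lemma exists_isFiniteMeasure_integral_sub_eq_sInt_mul {μ : SignedMeasure α} {Y : α → ℝ}
    (hY : Measurable Y) (hYint : Integrable Y μ.totalVariation) :
    ∃ a b : Measure α, IsFiniteMeasure a ∧ IsFiniteMeasure b ∧
      ∀ g : α → ℝ, Integrable (fun x => g x * Y x) μ.totalVariation →
        Integrable g a ∧ Integrable g b ∧
          (∫ x, g x ∂a) - ∫ x, g x ∂b = sInt μ (fun x => g x * Y x) := by
  set p := μ.toJordanDecomposition.posPart
  set n := μ.toJordanDecomposition.negPart
  set pos : Measure α → Measure α := fun ν => ν.withDensity fun x => ENNReal.ofReal (Y x)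
  set neg : Measure α → Measure α := fun ν => ν.withDensity fun x => ENNReal.ofReal (-Y x)
  have hdiff (g : α → ℝ) (hg : Integrable (fun x => g x * Y x) μ.totalVariation) :
      Integrable g (pos p + neg n) ∧ Integrable g (pos n + neg p) ∧
        (∫ x, g x ∂(pos p + neg n)) - ∫ x, g x ∂(pos n + neg p) =
          sInt μ (fun x => g x * Y x) := by
    obtain ⟨hgp, hgn⟩ := integrable_totalVariation_iff.1 hg
    have hpos {ν : Measure α} (h : Integrable (fun x => g x * Y x) ν) : Integrable g (pos ν) :=
      integrable_withDensity_ofReal hY h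
    have hneg {ν : Measure α} (h : Integrable (fun x => g x * Y x) ν) : Integrable g (neg ν) :=
      integrable_withDensity_ofReal hY.neg (by simpa using h.neg)
    refine ⟨(hpos hgp).add_measure (hneg hgn), (hpos hgn).add_measure (hneg hgp), ?_⟩
    rw [integral_add_measure (hpos hgp) (hneg hgn), integral_add_measure (hpos hgn) (hneg hgp),
      sInt, ← integral_withDensity_ofReal_sub hY hgp, ← integral_withDensity_ofReal_sub hY hgn]
    ring
  obtain ⟨hpfin, hnfin, -⟩ := hdiff (fun _ => 1) (by simpa using hYint)
  exact ⟨_, _, (integrable_const_iff_isFiniteMeasure one_ne_zero).1 hpfin,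
    (integrable_const_iff_isFiniteMeasure one_ne_zero).1 hnfin, hdiff⟩

variable {X : Type*} [TopologicalSpace X] [T2Space X] [LocallyCompactSpace X]
  [SecondCountableTopology X] [MeasurableSpace X] [BorelSpace X]

open scoped CompactlySupported in
theorem exists_measure_add_eq_of_forall_integral_le {a b : Measure X}
    [IsFiniteMeasureOnCompacts a] [IsFiniteMeasureOnCompacts b]
    (hle : ∀ f : C_c(X, ℝ), 0 ≤ f → ∫ x, f x ∂b ≤ ∫ x, f x ∂a) :
    ∃ σ : Measure X, σ + b = a := by
  let Λ : C_c(X, ℝ) →ₚ[ℝ] ℝ := PositiveLinearMap.mk₀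
    ((CompactlySupportedContinuousMap.integralPositiveLinearMap a).toLinearMap -
      (CompactlySupportedContinuousMap.integralPositiveLinearMap b).toLinearMap)
    fun f hf => sub_nonneg.2 (hle f hf)
  have : IsFiniteMeasureOnCompacts (RealRMK.rieszMeasure Λ + b) :=
    ⟨fun K hK => ENNReal.add_lt_top.2 ⟨hK.measure_lt_top, hK.measure_lt_top⟩⟩
  refine ⟨RealRMK.rieszMeasure Λ, Measure.ext_of_integral_eq_on_compactlySupported fun f => ?_⟩
  rw [integral_add_measure f.integrable f.integrable, RealRMK.integral_rieszMeasure]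
  exact sub_add_cancel _ _

theorem exists_measure_integral_eq_sInt_comp_mul {μ : SignedMeasure α} {φ : α → X}
    (hφ : Measurable φ) {Y : α → ℝ} (hY : Measurable Y)
    (hYint : Integrable Y μ.totalVariation)
    (hpos : ∀ h : X → ℝ, Continuous h → HasCompactSupport h → (∀ t, 0 ≤ h t) →
      0 ≤ sInt μ (fun x => h (φ x) * Y x)) :
    ∃ σ : Measure X, ∀ g : X → ℝ, Measurable g →
      Integrable (fun x => g (φ x) * Y x) μ.totalVariation →
        Integrable g σ ∧ ∫ t, g t ∂σ = sInt μ (fun x => g (φ x) * Y x) := by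
  obtain ⟨a, b, _, _, hab⟩ := exists_isFiniteMeasure_integral_sub_eq_sInt_mul hY hYint
  have hmap (c : Measure α) {g : X → ℝ} (hg : Measurable g) :
      ∫ t, g t ∂c.map φ = ∫ x, g (φ x) ∂c :=
    integral_map hφ.aemeasurable hg.aestronglyMeasurable
  obtain ⟨σ, hσ⟩ : ∃ σ : Measure X, σ + b.map φ = a.map φ := by
    refine exists_measure_add_eq_of_forall_integral_le fun f hf => sub_nonneg.1 ?_
    obtain ⟨C, hC⟩ := f.hasCompactSupport.exists_bound_of_continuous f.continuous
    have hfY : Integrable (fun x => f (φ x) * Y x) μ.totalVariation :=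
      hYint.bdd_mul (c := C) (f.continuous.measurable.comp hφ).aestronglyMeasurable
        (ae_of_all _ fun x => hC _)
    rw [hmap a (g := f) f.continuous.measurable, hmap b (g := f) f.continuous.measurable,
      (hab _ hfY).2.2]
    exact hpos f f.continuous f.hasCompactSupport hf
  refine ⟨σ, fun g hg hgY => ?_⟩
  obtain ⟨hga, -, hsub⟩ := hab _ hgY
  have hga' : Integrable g (σ + b.map φ) :=
    hσ ▸ (integrable_map_measure hg.aestronglyMeasurable hφ.aemeasurable).2 hga
  obtain ⟨hgσ, hgb'⟩ := integrable_add_measure.1 hga'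
  refine ⟨hgσ, ?_⟩
  rw [← hsub, ← hmap a hg, ← hmap b hg, ← hσ, integral_add_measure hgσ hgb', add_sub_cancel_right]

end PushforwardWithDensity

section PolynomialEvaluation

variable {ι : Type*}

lemma eval_psum_two [Fintype ι] (x : EuclideanSpace ℝ ι) : eval x (psum ι ℝ 2) = ‖x‖ ^ 2 := by
  simp [psum, EuclideanSpace.real_norm_sq_eq]

lemma continuous_eval_euclideanSpace (P : MvPolynomial ι ℝ) :
    Continuous fun x : EuclideanSpace ℝ ι => eval x P :=
  P.continuous_eval.comp (PiLp.continuous_ofLp 2 _)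

lemma evalC_map_ofReal {d : ℕ} (P : MvPolynomial (Fin d) ℝ) (x : E d) :
    evalC (P.map (algebraMap ℝ ℂ)) x = (eval x P : ℝ) := by
  rw [evalC, eval_map]
  exact aeval_algebraMap_apply ℂ x P

lemma IsMomentMeasure.integrable_radial_mul_eval {d : ℕ} {μ : SignedMeasure (E d)}
    (hμ : IsMomentMeasure μ) (P : MvPolynomial (Fin d) ℝ) {h : ℝ → ℝ} (hh : Measurable h)
    {C : ℝ} (hC : ∀ t, 0 ≤ t → |h t| ≤ C) :
    Integrable (fun x : E d => h (‖x‖ ^ 2) * eval x P) μ.totalVariation := by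
  have hP : Integrable (fun x : E d => eval x P) μ.totalVariation := by
    simpa only [evalC_map_ofReal, RCLike.re_to_complex, Complex.ofReal_re] using
      (hμ (P.map (algebraMap ℝ ℂ))).re
  exact hP.bdd_mul (c := C) (hh.comp (by fun_prop)).aestronglyMeasurable
    (ae_of_all _ fun x => hC _ (sq_nonneg _))

end PolynomialEvaluation

section BoundedQuotients

open scoped BoundedContinuousFunction

variable (ι : Type*) [Fintype ι]

/-- The algebra of bounded functions of the form `P(x) / (1 + |x|²)^m` with `P` a polynomial.
It is encoded without division. -/
def boundedQuotientSubalgebra : StarSubalgebra ℝ (EuclideanSpace ℝ ι →ᵇ ℝ) where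
  carrier := {g | ∃ (m : ℕ) (P : MvPolynomial ι ℝ), ∀ x, g x * (1 + ‖x‖ ^ 2) ^ m = eval x P}
  mul_mem' := by
    rintro f g ⟨m, P, hf⟩ ⟨n, Q, hg⟩
    refine ⟨m + n, P * Q, fun x => ?_⟩
    rw [BoundedContinuousFunction.mul_apply, map_mul, ← hf, ← hg]
    ring
  add_mem' := by
    rintro f g ⟨m, P, hf⟩ ⟨n, Q, hg⟩
    refine ⟨m + n, P * (1 + psum ι ℝ 2) ^ n + Q * (1 + psum ι ℝ 2) ^ m, fun x => ?_⟩
    simp only [BoundedContinuousFunction.add_apply, map_add, map_mul, map_pow, map_one,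
      eval_psum_two, ← hf, ← hg]
    ring
  algebraMap_mem' r := ⟨0, C r, fun x => by simp⟩
  star_mem' := by
    rintro f ⟨m, P, hf⟩
    exact ⟨m, P, fun x => by simpa using hf x⟩

variable {ι}

lemma norm_inv_one_add_norm_sq_le (x : EuclideanSpace ℝ ι) : ‖(1 + ‖x‖ ^ 2)⁻¹‖ ≤ 1 := by
  rw [Real.norm_of_nonneg (by positivity)]
  exact inv_le_one_of_one_le₀ (by simp)

lemma norm_coord_mul_inv_one_add_norm_sq_le (x : EuclideanSpace ℝ ι) (i : ι) :
    ‖x i * (1 + ‖x‖ ^ 2)⁻¹‖ ≤ 1 := by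
  rw [norm_mul, Real.norm_of_nonneg (r := (1 + ‖x‖ ^ 2)⁻¹) (by positivity),
    mul_inv_le_iff₀ (by positivity)]
  nlinarith [PiLp.norm_apply_le x i, sq_nonneg (‖x‖ - 1)]

theorem separatesPoints_boundedQuotientSubalgebra :
    ((boundedQuotientSubalgebra ι).map
      (BoundedContinuousFunction.toContinuousMapStarₐ ℝ)).SeparatesPoints := by
  intro x y hxy
  by_contra! hcon
  have heq : ∀ g ∈ boundedQuotientSubalgebra ι, g x = g y := fun g hg =>
    hcon _ ⟨_, ⟨g, hg, rfl⟩, rfl⟩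
  have hpos (z : EuclideanSpace ℝ ι) : 1 + ‖z‖ ^ 2 ≠ 0 := by positivity
  have hcont : Continuous fun z : EuclideanSpace ℝ ι => (1 + ‖z‖ ^ 2)⁻¹ :=
    Continuous.inv₀ (by fun_prop) hpos
  have hweight : (1 + ‖x‖ ^ 2)⁻¹ = (1 + ‖y‖ ^ 2)⁻¹ :=
    heq (.ofNormedAddCommGroup _ hcont 1 norm_inv_one_add_norm_sq_le)
      ⟨1, 1, fun z => by simp [hpos z]⟩
  refine hxy (PiLp.ext fun i => ?_)
  have hcoord : x i * (1 + ‖x‖ ^ 2)⁻¹ = y i * (1 + ‖y‖ ^ 2)⁻¹ :=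
    heq (.ofNormedAddCommGroup _ (Continuous.mul (by fun_prop) hcont) 1
      fun z => norm_coord_mul_inv_one_add_norm_sq_le z i) ⟨1, X i, fun z => by simp [hpos z]⟩
  exact mul_right_cancel₀ (inv_ne_zero (hpos y)) (hweight ▸ hcoord)

end BoundedQuotients

/-- `τ` is a solution of the Stieltjes moment problem with moment sequence `s`: a nonnegative
measure on `[0, ∞)`, encoded as a measure on `ℝ` that does not charge `(-∞, 0)`. -/
def SolvesStieltjesProblem (s : ℕ → ℂ) (τ : Measure ℝ) : Prop :=
  τ (Set.Iio 0) = 0 ∧ (∀ m : ℕ, Integrable (fun t => t ^ m) τ) ∧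
    ∀ m : ℕ, (∫ t, (t : ℂ) ^ m ∂τ) = s m

namespace HarmonicBasis

variable {d : ℕ} (B : HarmonicBasis d)

/-- `μ` is a pseudo-positive moment measure representing the functional `T`. -/
def Represents (T : MvPolynomial (Fin d) ℂ → ℂ) (μ : SignedMeasure (E d)) : Prop :=
  B.PseudoPositive μ ∧ IsMomentMeasure μ ∧ ∀ f, T f = sInt μ (evalC f)

variable {B} {T : MvPolynomial (Fin d) ℂ → ℂ} {μ μ₁ μ₂ : SignedMeasure (E d)}

lemma component_X_pow_eq_sInt (hT : ∀ f, T f = sInt μ (evalC f)) (k : ℕ) (l : Fin (B.a k))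
    (m : ℕ) : B.component T k l (Polynomial.X ^ m) =
      (sInt μ (fun x => (‖x‖ ^ 2) ^ m * B.Yf k l x) : ℝ) := by
  have hreal : Polynomial.aeval (normSqP d) (Polynomial.X ^ m : Polynomial ℂ) * B.YC k l =
      (psum (Fin d) ℝ 2 ^ m * B.Y k l).map (algebraMap ℝ ℂ) := by
    simp [normSqP, psum, YC]
  rw [component, hT, hreal, ← sInt_ofReal]
  congr 1 with x
  rw [evalC_map_ofReal, map_mul, map_pow, eval_psum_two, Yf]

lemma PseudoPositive.exists_measure_integral_eq_sInt (hpos : B.PseudoPositive μ)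
    (hμ : IsMomentMeasure μ) (k : ℕ) (l : Fin (B.a k)) :
    ∃ τ : Measure ℝ, τ (Set.Iio 0) = 0 ∧ ∀ g : ℝ → ℝ, Measurable g →
      Integrable (fun x => g (‖x‖ ^ 2) * B.Yf k l x) μ.totalVariation →
        Integrable g τ ∧ ∫ t, g t ∂τ = sInt μ (fun x => g (‖x‖ ^ 2) * B.Yf k l x) := by
  have hY : Integrable (B.Yf k l) μ.totalVariation := by
    simpa using! hμ.integrable_radial_mul_eval (B.Y k l) (h := 1) measurable_one (C := 1) (by simp)
  obtain ⟨σ, hσ⟩ := exists_measure_integral_eq_sInt_comp_mul measurable_norm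
    (continuous_eval_euclideanSpace (B.Y k l)).measurable hY (hpos k l)
  have hsq : Measurable fun r : ℝ => r ^ 2 := by fun_prop
  refine ⟨σ.map (· ^ 2), ?_, fun g hg hgY => ?_⟩
  · have hempty : (fun r : ℝ => r ^ 2) ⁻¹' Set.Iio 0 = ∅ := by ext r; simp [sq_nonneg r]
    rw [Measure.map_apply hsq measurableSet_Iio, hempty, measure_empty]
  · rw [integrable_map_measure hg.aestronglyMeasurable hsq.aemeasurable,
      integral_map hsq.aemeasurable hg.aestronglyMeasurable]
    exact hσ _ (hg.comp hsq) hgY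

lemma Represents.exists_solvesStieltjesProblem (hμ : B.Represents T μ) (k : ℕ)
    (l : Fin (B.a k)) :
    ∃ τ, SolvesStieltjesProblem (fun m => B.component T k l (Polynomial.X ^ m)) τ ∧
      ∀ g : ℝ → ℝ, Measurable g →
        Integrable (fun x => g (‖x‖ ^ 2) * B.Yf k l x) μ.totalVariation →
          ∫ t, g t ∂τ = sInt μ (fun x => g (‖x‖ ^ 2) * B.Yf k l x) := by
  obtain ⟨hpos, hmom, hT⟩ := hμ
  obtain ⟨τ, hτ0, hτ⟩ := hpos.exists_measure_integral_eq_sInt hmom k l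
  have hint (m : ℕ) : Integrable (fun x => (‖x‖ ^ 2) ^ m * B.Yf k l x) μ.totalVariation := by
    simpa [Yf, eval_psum_two] using hmom.integrable_radial_mul_eval
      (psum (Fin d) ℝ 2 ^ m * B.Y k l) (h := 1) measurable_one (C := 1) (by simp)
  have hmoment (m : ℕ) := hτ (· ^ m) (by fun_prop) (hint m)
  refine ⟨τ, ⟨hτ0, fun m => (hmoment m).1, fun m => ?_⟩, fun g hg hgY => (hτ g hg hgY).2⟩
  simp only [component_X_pow_eq_sInt hT]
  rw [← (hmoment m).2, ← integral_complex_ofReal]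
  simp only [Complex.ofReal_pow]

lemma Represents.sInt_radial_mul_Yf_eq (hμ₁ : B.Represents T μ₁) (hμ₂ : B.Represents T μ₂)
    {k : ℕ} {l : Fin (B.a k)}
    (hdet : ∃! τ, SolvesStieltjesProblem (fun m => B.component T k l (Polynomial.X ^ m)) τ)
    {g : ℝ → ℝ} (hg : Measurable g)
    (hg₁ : Integrable (fun x => g (‖x‖ ^ 2) * B.Yf k l x) μ₁.totalVariation)
    (hg₂ : Integrable (fun x => g (‖x‖ ^ 2) * B.Yf k l x) μ₂.totalVariation) :
    sInt μ₁ (fun x => g (‖x‖ ^ 2) * B.Yf k l x) =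
      sInt μ₂ (fun x => g (‖x‖ ^ 2) * B.Yf k l x) := by
  obtain ⟨τ₁, hτ₁, hint₁⟩ := hμ₁.exists_solvesStieltjesProblem k l
  obtain ⟨τ₂, hτ₂, hint₂⟩ := hμ₂.exists_solvesStieltjesProblem k l
  rw [← hint₁ g hg hg₁, ← hint₂ g hg hg₂, hdet.unique hτ₁ hτ₂]

theorem Represents.sInt_radial_mul_eval_eq [NeZero d] (hμ₁ : B.Represents T μ₁)
    (hμ₂ : B.Represents T μ₂)
    (hdet : ∀ k l,
      ∃! τ, SolvesStieltjesProblem (fun m => B.component T k l (Polynomial.X ^ m)) τ)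
    {h : ℝ → ℝ} (hh : Measurable h) {C : ℝ} (hC : ∀ t, 0 ≤ t → |h t| ≤ C)
    (P : MvPolynomial (Fin d) ℝ) :
    sInt μ₁ (fun x : E d => h (‖x‖ ^ 2) * eval x P) =
      sInt μ₂ (fun x : E d => h (‖x‖ ^ 2) * eval x P) := by
  have hint₁ (Q) := hμ₁.2.1.integrable_radial_mul_eval Q hh hC
  have hint₂ (Q) := hμ₂.2.1.integrable_radial_mul_eval Q hh hC
  induction B.mem_span_psum_two_pow_mul_Y P using Submodule.span_induction with
  | mem Q hQ =>
    obtain ⟨j, k, l, rfl⟩ := hQ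
    have hgen (x : E d) : h (‖x‖ ^ 2) * eval x (psum (Fin d) ℝ 2 ^ j * B.Y k l) =
        h (‖x‖ ^ 2) * (‖x‖ ^ 2) ^ j * B.Yf k l x := by
      rw [map_mul, map_pow, eval_psum_two, mul_assoc, Yf]
    have hgen₁ := hint₁ (psum (Fin d) ℝ 2 ^ j * B.Y k l)
    have hgen₂ := hint₂ (psum (Fin d) ℝ 2 ^ j * B.Y k l)
    simp only [hgen] at hgen₁ hgen₂ ⊢
    exact hμ₁.sInt_radial_mul_Yf_eq hμ₂ (hdet k l) (g := fun t => h t * t ^ j) (by fun_prop)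
      hgen₁ hgen₂
  | zero => simp [sInt]
  | add Q R _ _ hQ hR =>
    simp only [map_add, mul_add]
    rw [sInt_add (hint₁ Q) (hint₁ R), sInt_add (hint₂ Q) (hint₂ R), hQ, hR]
  | smul c Q _ hQ =>
    simp only [smul_eval, ← smul_eq_mul c, mul_smul_comm, sInt_smul, hQ]

end HarmonicBasis

theorem statement13 {d : ℕ} (hd : 1 ≤ d) (B : HarmonicBasis d)
    (T : MvPolynomial (Fin d) ℂ →ₗ[ℂ] ℂ) (hT : B.PPD T)
    (hdet : ∀ (k : ℕ) (l : Fin (B.a k)), ∃! τ : Measure ℝ,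
      τ (Set.Iio 0) = 0 ∧ (∀ m : ℕ, Integrable (fun t => t ^ m) τ) ∧
      ∀ m : ℕ, (∫ t, (t : ℂ) ^ m ∂τ) = B.component T k l (Polynomial.X ^ m)) :
    ∀ μ₁ μ₂ : SignedMeasure (E d),
      (B.PseudoPositive μ₁ ∧ IsMomentMeasure μ₁ ∧
        ∀ f : MvPolynomial (Fin d) ℂ, T f = sInt μ₁ (evalC f)) →
      (B.PseudoPositive μ₂ ∧ IsMomentMeasure μ₂ ∧
        ∀ f : MvPolynomial (Fin d) ℂ, T f = sInt μ₂ (evalC f)) →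
      μ₁ = μ₂ := by
  intro μ₁ μ₂ (hμ₁ : B.Represents T μ₁) (hμ₂ : B.Represents T μ₂)
  have : NeZero d := ⟨by lia⟩
  refine signedMeasure_ext_of_forall_mem_subalgebra_sInt_eq
    separatesPoints_boundedQuotientSubalgebra ?_
  rintro g ⟨m, P, hg⟩
  have hquot : ⇑g = fun x : E d => ((1 + ‖x‖ ^ 2)⁻¹) ^ m * eval x P := by
    ext x
    rw [← hg x, inv_pow, mul_comm, mul_inv_cancel_right₀ (by positivity)]
  rw [hquot]
  refine hμ₁.sInt_radial_mul_eval_eq hμ₂ hdet (h := fun t => ((1 + t)⁻¹) ^ m) (by fun_prop)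
    (C := 1) (fun t ht => ?_) P
  rw [abs_of_nonneg (by positivity)]
  exact pow_le_one₀ (by positivity) (inv_le_one_of_one_le₀ (by linarith))
end
end
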